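/- arXiv:1904.02310 — 4 statements merged into one kernel-verified Lean document; each statement's English description precedes it below -/
import Mathlib

section
/- Let m ≡ 0 (mod 4) and let e be an integer with 1 ≤ e ≤ m/2 and gcd(m,e) = 2. Then the number of codewords of Hamming weight 6 in the extended code C̄_E equals Ā_6 = 2^m(2^m − 1)(2^{2m−4} + 2^{m−1} + 6)/45. -/
open Polynomial Finset

/-- The polynomial `c₀ + c₁x + ⋯ + c_{n−1}x^{n−1}` associated to a vector. -/
noncomputable def codePoly {n : ℕ} (c : Fin n → ZMod 2) : Polynomial (ZMod 2) :=
  ∑ i : Fin n, Polynomial.C (c i) * Polynomial.X ^ (i : ℕ)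

/-- The generator polynomial `g_E(x) = M_α(x) · M_{α^{1+2^e}}(x)`. -/
noncomputable def gE (m e : ℕ) (α : GaloisField 2 m) : Polynomial (ZMod 2) :=
  minpoly (ZMod 2) α * minpoly (ZMod 2) (α ^ (1 + 2 ^ e))

/-- The binary cyclic code `C_E` of length `2^m − 1` with generator polynomial `g_E`. -/
def CE (m e : ℕ) (α : GaloisField 2 m) : Set (Fin (2 ^ m - 1) → ZMod 2) :=
  {c | gE m e α ∣ codePoly c}

/-- The extended code `C̄_E ⊆ F_2^{2^m}`: the first `2^m − 1` coordinates form a codeword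
of `C_E` and all `2^m` coordinates sum to zero. -/
def CEbar (m e : ℕ) (α : GaloisField 2 m) : Set (Fin (2 ^ m) → ZMod 2) :=
  {c | (fun i : Fin (2 ^ m - 1) => c (Fin.castLE (Nat.sub_le _ _) i)) ∈ CE m e α ∧
       ∑ i, c i = 0}
/-!
The words of weight 6 are the indicators of the 6-subsets `T` of the field `F` with
`∑ x ∈ T, x = ∑ x ∈ T, x ^ (1 + 2 ^ e) = 0`. By orthogonality of characters their number is the
average over `(a, b)` of the sixth elementary symmetric function of the signs
`ψ (a x ^ (1 + 2 ^ e) + b x)`, `x ∈ F`, where `ψ` is the trace character. As the signs square to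
one, Newton's identities express that function by the powers `S ^ 2`, `S ^ 4`, `S ^ 6` of the Weil
sum `S a b` alone. Since `ψ (a x ^ (1 + 2 ^ e))` is the sign of a quadratic form over the prime
field, `S a b ^ 4 = |F| |rad a| S a b ^ 2` with `rad a` the radical of its polar form, and
Parseval's identity `∑ b, S a b ^ 2 = |F| ^ 2` leaves only the first two moments of `|rad a|`.
These reduce to counting fixed points of powers of the Frobenius map.
-/

section Esymm

variable {R : Type*}

theorem esymm_zero [CommSemiring R] (s : Multiset R) : s.esymm 0 = 1 := by
  simp [Multiset.esymm]

theorem esymm_one [CommSemiring R] (s : Multiset R) : s.esymm 1 = s.sum := by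
  simp [Multiset.esymm, Multiset.powersetCard_one]

theorem esymm_cons_succ [CommSemiring R] (a : R) (s : Multiset R) (k : ℕ) :
    (a ::ₘ s).esymm (k + 1) = s.esymm (k + 1) + a * s.esymm k := by
  simp [Multiset.esymm, Multiset.powersetCard_cons, Multiset.sum_map_mul_left]

/-- The coefficients of `(1 - t ^ 2) E' = (s.sum - s.card * t) E` for `E = ∏ x ∈ s, (1 + x t)`,
which holds because `x / (1 + x t) = (x - t) / (1 - t ^ 2)` when `x ^ 2 = 1`. -/
theorem add_two_mul_esymm_add_two [CommRing R] {s : Multiset R} (hs : ∀ x ∈ s, x ^ 2 = 1) (k : ℕ) :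
    (k + 2) * s.esymm (k + 2) = s.sum * s.esymm (k + 1) - (s.card - k) * s.esymm k := by
  induction s using Multiset.induction_on generalizing k with
  | empty => cases k <;> simp [Multiset.esymm, Multiset.powersetCard_zero_right]
  | cons a s ih =>
    have ha : a ^ 2 = 1 := hs a (Multiset.mem_cons_self a s)
    replace ih := ih fun x hx => hs x (Multiset.mem_cons_of_mem hx)
    have ih₀ := ih k
    rw [Multiset.sum_cons, Multiset.card_cons]
    cases k with
    | zero =>
      simp only [zero_add, esymm_cons_succ, esymm_zero, esymm_one, Multiset.sum_cons] at ih₀ ⊢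
      push_cast at ih₀ ⊢
      linear_combination ih₀ - ha
    | succ k =>
      have ih₁ := ih k
      simp only [esymm_cons_succ] at ih₀ ⊢
      push_cast at ih₀ ⊢
      linear_combination ih₀ + a * ih₁ - s.esymm (k + 1) * ha

theorem mul_esymm_six [CommRing R] {s : Multiset R} (hs : ∀ x ∈ s, x ^ 2 = 1) :
    720 * s.esymm 6 =
      s.sum ^ 6 - (15 * s.card - 40) * s.sum ^ 4 +
        (45 * (s.card : R) ^ 2 - 210 * s.card + 184) * s.sum ^ 2 -
        15 * s.card * (s.card - 2) * (s.card - 4) := by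
  have h₂ := add_two_mul_esymm_add_two hs 0
  have h₃ := add_two_mul_esymm_add_two hs 1
  have h₄ := add_two_mul_esymm_add_two hs 2
  have h₅ := add_two_mul_esymm_add_two hs 3
  have h₆ := add_two_mul_esymm_add_two hs 4
  norm_num only [esymm_zero, esymm_one] at h₂ h₃ h₄ h₅ h₆
  set S := s.sum
  set q : R := Nat.cast s.card
  have e₃ : 6 * s.esymm 3 = S ^ 3 - (3 * q - 2) * S := by linear_combination 2 * h₃ + S * h₂
  have e₄ : 24 * s.esymm 4 = S ^ 4 - (6 * q - 8) * S ^ 2 + 3 * q * (q - 2) := by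
    linear_combination 6 * h₄ + S * e₃ - 3 * (q - 2) * h₂
  have e₅ : 120 * s.esymm 5 =
      S ^ 5 - (10 * q - 20) * S ^ 3 + (15 * q ^ 2 - 50 * q + 24) * S := by
    linear_combination 24 * h₅ + S * e₄ - 4 * (q - 3) * e₃
  linear_combination 120 * h₆ + S * e₅ - 5 * (q - 4) * e₄

end Esymm

section Characters

variable {F : Type*} [Field F]

theorem addChar_map_sum {A M ι : Type*} [AddCommMonoid A] [CommMonoid M] (ψ : AddChar A M)
    (s : Finset ι) (f : ι → A) : ψ (∑ i ∈ s, f i) = ∏ i ∈ s, ψ (f i) :=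
  map_prod ψ.toMonoidHom (fun i => Multiplicative.ofAdd (f i)) s

theorem addChar_sq_eq_one {A M : Type*} [Ring A] [CharP A 2] [CommMonoid M] (ψ : AddChar A M)
    (x : A) : ψ x ^ 2 = 1 := by
  rw [sq, ← AddChar.map_add_eq_mul, CharTwo.add_self_eq_zero, AddChar.map_zero_eq_one]

theorem addChar_pow_two_pow {A M : Type*} [Semiring A] [CommMonoid M] {ψ : AddChar A M}
    (hψ : ∀ x, ψ (x ^ 2) = ψ x) (e : ℕ) (x : A) : ψ (x ^ 2 ^ e) = ψ x := by
  induction e with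
  | zero => simp
  | succ e ih => rw [pow_succ, pow_mul, hψ, ih]

theorem sum_sum_addChar [Fintype F] [DecidableEq F] {R : Type*} [CommRing R] [IsDomain R]
    {ψ : AddChar F R} (hψ : ψ.IsPrimitive) (u v : F) :
    ∑ a, ∑ b, ψ (a * u + b * v) = if u = 0 ∧ v = 0 then (Fintype.card F : R) ^ 2 else 0 := by
  simp_rw [AddChar.map_add_eq_mul, ← mul_sum, ← sum_mul, AddChar.sum_mulShift _ hψ, ite_and]
  split_ifs <;> simp [sq]

theorem sq_sum_of_map_add {A S : Type*} [AddGroup A] [Fintype A] [CommSemiring S] {g : A → S}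
    (hg : ∀ x y, g (x + y) = g x * g y) : (∑ x, g x) ^ 2 = Fintype.card A * ∑ x, g x := by
  calc (∑ x, g x) ^ 2 = ∑ x, ∑ y, g (x + y) := by simp only [sq, sum_mul_sum, hg]
    _ = ∑ _x : A, ∑ y, g y := Fintype.sum_congr _ _ fun x => Equiv.sum_comp (Equiv.addLeft x) g
    _ = Fintype.card A * ∑ y, g y := by simp

/-- The additive character `x ↦ (-1) ^ Tr x` of a finite field of characteristic two. -/
noncomputable def traceChar (F : Type*) [Field F] [Algebra (ZMod 2) F] : AddChar F ℤ :=
  (AddChar.zmodChar 2 (neg_one_sq : (-1 : ℤ) ^ 2 = 1)).compAddMonoidHom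
    (Algebra.trace (ZMod 2) F).toAddMonoidHom

theorem isPrimitive_traceChar [Finite F] [Algebra (ZMod 2) F] : (traceChar F).IsPrimitive := by
  obtain ⟨x, hx⟩ := Algebra.trace_surjective (ZMod 2) F 1
  refine AddChar.IsPrimitive.of_ne_one (AddChar.ne_one_iff.2 ⟨x, ?_⟩)
  simp [traceChar, hx, AddChar.zmodChar_apply, ZMod.val_one]

theorem traceChar_sq [Finite F] [Algebra (ZMod 2) F] (x : F) :
    traceChar F (x ^ 2) = traceChar F x := by
  have h := Algebra.trace_eq_of_algEquiv (FiniteField.frobeniusAlgEquivOfAlgebraic (ZMod 2) F) x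
  rw [FiniteField.coe_frobeniusAlgEquivOfAlgebraic, ZMod.card] at h
  exact congrArg (AddChar.zmodChar 2 (neg_one_sq : (-1 : ℤ) ^ 2 = 1)) h

end Characters

theorem card_filter_pow_pow_eq_self {F : Type*} [Field F] [Fintype F] [DecidableEq F] {q m : ℕ}
    (hF : Fintype.card F = q ^ m) (k : ℕ) : #{x : F | x ^ q ^ k = x} = q ^ m.gcd k := by
  have hq : 0 < q := Nat.pos_of_ne_zero fun hq =>
    (hF ▸ Fintype.one_lt_card (α := F)).not_ge (hq ▸ zero_pow_le_one m)
  have hunits : #{u : Fˣ | u ^ (q ^ k - 1) = 1} = q ^ m.gcd k - 1 := by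
    rw [← Nat.pow_sub_one_gcd_pow_sub_one, ← hF, ← Nat.card_eq_fintype_card, ← Nat.card_units,
      ← IsCyclic.card_powMonoidHom_ker, ← Fintype.card_subtype, ← Nat.card_eq_fintype_card]
    rfl
  have hset : ({x : F | x ^ q ^ k = x} : Finset F) = insert 0
      (({u : Fˣ | u ^ (q ^ k - 1) = 1} : Finset Fˣ).map ⟨Units.val, Units.val_injective⟩) := by
    ext x
    rcases eq_or_ne x 0 with rfl | hx
    · simp [hq.ne']
    · lift x to Fˣ using hx.isUnit
      have hpow : x ^ q ^ k = x ^ (q ^ k - 1) * x := by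
        rw [← pow_succ, Nat.sub_add_cancel (Nat.pow_pos hq)]
      have hmem : x ^ q ^ k = x ↔ x ^ (q ^ k - 1) = 1 := by rw [hpow, mul_eq_right]
      simp only [← Units.val_pow_eq_pow_val, Units.val_inj, mem_filter_univ, mem_insert,
        Units.ne_zero, mem_map, Function.Embedding.coeFn_mk, exists_eq_right, hmem, false_or]
  rw [hset, card_insert_of_notMem (by simp), card_map, hunits,
    Nat.sub_add_cancel (Nat.pow_pos hq)]

section WeilSums

variable {F R : Type*} [Field F] [CharP F 2] [CommRing R]

/-- The summand of `weilSum`: an additive character applied to `a x ^ (1 + 2 ^ e) + b x`. -/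
def quadChar (ψ : AddChar F R) (e : ℕ) (a b x : F) : R :=
  ψ (a * x ^ (1 + 2 ^ e) + b * x)

/-- The radical of the polar form of the quadratic form `x ↦ Tr (a x ^ (1 + 2 ^ e))`. -/
def polarRadical (e : ℕ) (a : F) : AddSubgroup F :=
  AddMonoidHom.eqLocus (AddMonoidHom.mulLeft a)
    ((AddMonoidHom.mulLeft (a ^ 2 ^ e)).comp (iterateFrobenius F 2 (2 * e)))

theorem mem_polarRadical {e : ℕ} {a z : F} :
    z ∈ polarRadical e a ↔ a * z = a ^ 2 ^ e * z ^ 2 ^ (2 * e) :=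
  Iff.rfl

instance [DecidableEq F] (e : ℕ) (a : F) : DecidablePred (· ∈ polarRadical e a) :=
  fun _ => decidable_of_iff' _ mem_polarRadical

theorem quadChar_add {ψ : AddChar F R} (hψ : ∀ x, ψ (x ^ 2) = ψ x) (e : ℕ) (a b x z : F) :
    quadChar ψ e a b (x + z) = quadChar ψ e a b x * quadChar ψ e a b z *
      ψ (x ^ 2 ^ e * (a * z + a ^ 2 ^ e * z ^ 2 ^ (2 * e))) := by
  have hfrob : ψ (x ^ 2 ^ e * (a ^ 2 ^ e * z ^ 2 ^ (2 * e))) = ψ (a * x * z ^ 2 ^ e) := by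
    rw [← addChar_pow_two_pow hψ e (a * x * z ^ 2 ^ e)]
    congr 1
    rw [two_mul, pow_add, pow_mul]
    ring
  rw [mul_add, AddChar.map_add_eq_mul, hfrob]
  simp only [quadChar, ← AddChar.map_add_eq_mul]
  congr 1
  rw [pow_add _ 1, add_pow_char_pow]
  ring

theorem quadChar_add_of_mem {ψ : AddChar F R} (hψ : ∀ x, ψ (x ^ 2) = ψ x) {e : ℕ} {a z : F}
    (hz : z ∈ polarRadical e a) (b x : F) :
    quadChar ψ e a b (x + z) = quadChar ψ e a b x * quadChar ψ e a b z := by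
  rw [quadChar_add hψ, mem_polarRadical.1 hz, CharTwo.add_self_eq_zero, mul_zero,
    AddChar.map_zero_eq_one, mul_one]

theorem quadChar_sq (ψ : AddChar F R) (e : ℕ) (a b x : F) : quadChar ψ e a b x ^ 2 = 1 :=
  addChar_sq_eq_one ψ _

variable [Fintype F]

/-- The Weil sum of the binomial `a x ^ (1 + 2 ^ e) + b x`. -/
def weilSum (ψ : AddChar F R) (e : ℕ) (a b : F) : R :=
  ∑ x, quadChar ψ e a b x

variable [IsDomain R] {ψ : AddChar F R}

theorem sum_sq_weilSum (hψ : ψ.IsPrimitive) (e : ℕ) (a : F) :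
    ∑ b, weilSum ψ e a b ^ 2 = (Fintype.card F : R) ^ 2 := by
  classical
  have hsq (b : F) : weilSum ψ e a b ^ 2 =
      ∑ x, ∑ y, ψ (a * x ^ (1 + 2 ^ e) + a * y ^ (1 + 2 ^ e)) * ψ (b * (x + y)) := by
    simp only [weilSum, quadChar, sq, sum_mul_sum, ← AddChar.map_add_eq_mul]
    refine sum_congr rfl fun x _ => sum_congr rfl fun y _ => congrArg ψ ?_
    ring
  calc ∑ b, weilSum ψ e a b ^ 2
      = ∑ x, ∑ y, ψ (a * x ^ (1 + 2 ^ e) + a * y ^ (1 + 2 ^ e)) * ∑ b, ψ (b * (x + y)) := by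
        simp_rw [hsq, mul_sum]
        rw [sum_comm]
        exact sum_congr rfl fun x _ => sum_comm
    _ = (Fintype.card F : R) ^ 2 := by
        simp [AddChar.sum_mulShift _ hψ, CharTwo.add_eq_zero, CharTwo.add_self_eq_zero, sq]

theorem sum_addChar_polar [DecidableEq F] (hψ : ψ.IsPrimitive) (e : ℕ) (a z : F) :
    ∑ x, ψ (x ^ 2 ^ e * (a * z + a ^ 2 ^ e * z ^ 2 ^ (2 * e))) =
      if z ∈ polarRadical e a then (Fintype.card F : R) else 0 := by
  calc ∑ x, ψ (x ^ 2 ^ e * (a * z + a ^ 2 ^ e * z ^ 2 ^ (2 * e)))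
      = ∑ y, ψ (y * (a * z + a ^ 2 ^ e * z ^ 2 ^ (2 * e))) :=
        (bijective_iterateFrobenius F 2 e).sum_comp
          fun y => ψ (y * (a * z + a ^ 2 ^ e * z ^ 2 ^ (2 * e)))
    _ = _ := by
        simp only [AddChar.sum_mulShift _ hψ, CharTwo.add_eq_zero, mem_polarRadical, Nat.cast_ite,
          Nat.cast_zero]

theorem weilSum_sq [DecidableEq F] (hψ : ψ.IsPrimitive) (hfrob : ∀ x, ψ (x ^ 2) = ψ x) (e : ℕ)
    (a b : F) :
    weilSum ψ e a b ^ 2 = Fintype.card F * ∑ z : polarRadical e a, quadChar ψ e a b z := by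
  calc weilSum ψ e a b ^ 2
      = ∑ x, ∑ z, quadChar ψ e a b x * quadChar ψ e a b (x + z) := by
        rw [weilSum, sq, sum_mul_sum]
        exact sum_congr rfl fun x _ => (Equiv.sum_comp (Equiv.addLeft x) _).symm
    _ = ∑ x, ∑ z, quadChar ψ e a b z *
          ψ (x ^ 2 ^ e * (a * z + a ^ 2 ^ e * z ^ 2 ^ (2 * e))) := by
        refine sum_congr rfl fun x _ => sum_congr rfl fun z _ => ?_
        rw [quadChar_add hfrob]
        linear_combination quadChar ψ e a b z *
          ψ (x ^ 2 ^ e * (a * z + a ^ 2 ^ e * z ^ 2 ^ (2 * e))) * quadChar_sq ψ e a b x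
    _ = ∑ z, if z ∈ polarRadical e a then Fintype.card F * quadChar ψ e a b z else 0 := by
        rw [sum_comm]
        simp_rw [← mul_sum, sum_addChar_polar hψ, mul_ite, mul_zero, mul_comm]
    _ = Fintype.card F * ∑ z : polarRadical e a, quadChar ψ e a b z := by
        rw [← sum_filter, ← mul_sum, sum_subtype (p := (· ∈ polarRadical e a)) _ (fun z => by simp)]

theorem weilSum_pow_four [DecidableEq F] (hψ : ψ.IsPrimitive) (hfrob : ∀ x, ψ (x ^ 2) = ψ x)
    (e : ℕ) (a b : F) :
    weilSum ψ e a b ^ 4 =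
      Fintype.card F * Fintype.card (polarRadical e a) * weilSum ψ e a b ^ 2 := by
  have hrad := sq_sum_of_map_add (g := fun z : polarRadical e a => quadChar ψ e a b z)
    fun x y => quadChar_add_of_mem hfrob y.2 b x
  rw [show 4 = 2 * 2 by rfl, pow_mul, weilSum_sq hψ hfrob, mul_pow, hrad]
  ring

end WeilSums

section RadicalMoments

variable {F : Type*} [Field F] [Fintype F]

theorem card_filter_mul_right {u : F} (hu : u ≠ 0) (p : F → Prop) [DecidablePred p] :
    #{x | p (x * u)} = #{x | p x} :=
  card_equiv (Equiv.mulRight₀ u hu) (by simp)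

variable [DecidableEq F] [CharP F 2] {m : ℕ}

theorem card_polarRadical_zero (e : ℕ) :
    Fintype.card (polarRadical e (0 : F)) = Fintype.card F := by
  simp [Fintype.card_subtype, mem_polarRadical]

theorem card_polarRadical_eq_one_or (hF : Fintype.card F = 2 ^ m) (e : ℕ) {a : F} (ha : a ≠ 0) :
    Fintype.card (polarRadical e a) = 1 ∨
      Fintype.card (polarRadical e a) = 2 ^ m.gcd (2 * e) := by
  rcases (polarRadical e a).bot_or_exists_ne_zero with hbot | ⟨z₀, hz₀, hne⟩
  · exact Or.inl (Fintype.card_eq_one_iff.2 ⟨0, fun z => Subtype.ext (hbot.le z.2)⟩)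
  · have hscale (x : F) : x * z₀ ∈ polarRadical e a ↔ x ^ 2 ^ (2 * e) = x := by
      rw [mem_polarRadical, mul_left_comm, mul_pow, mul_left_comm (a ^ 2 ^ e),
        ← mem_polarRadical.1 hz₀, mul_left_inj' (mul_ne_zero ha hne), eq_comm]
    right
    rw [Fintype.card_subtype, ← card_filter_mul_right hne (· ∈ polarRadical e a)]
    simp_rw [hscale]
    exact card_filter_pow_pow_eq_self hF _

theorem card_filter_mem_polarRadical (hF : Fintype.card F = 2 ^ m) (e : ℕ) {z : F} (hz : z ≠ 0) :
    #{a | z ∈ polarRadical e a} = 2 ^ m.gcd e := by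
  have hscale (a : F) : z ∈ polarRadical e a ↔
      (a * z ^ (2 ^ e + 1)) ^ 2 ^ e = a * z ^ (2 ^ e + 1) := by
    rw [mem_polarRadical, ← mul_right_inj' (pow_ne_zero (2 ^ e) hz), eq_comm]
    ring_nf
  simp_rw [hscale]
  rw [card_filter_mul_right (pow_ne_zero _ hz) fun x => x ^ 2 ^ e = x,
    card_filter_pow_pow_eq_self hF]

theorem sum_card_polarRadical (hF : Fintype.card F = 2 ^ m) (e : ℕ) :
    ∑ a : F, (Fintype.card (polarRadical e a) : ℤ) =
      2 ^ m + (2 ^ m - 1) * 2 ^ m.gcd e := by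
  have hswap : ∑ a : F, Fintype.card (polarRadical e a) =
      ∑ z : F, #{a | z ∈ polarRadical e a} := by
    simp only [Fintype.card_subtype, card_filter]
    exact sum_comm
  have hzero : #{a : F | 0 ∈ polarRadical e a} = 2 ^ m := by simp [zero_mem, hF]
  rw [← Nat.cast_sum, hswap, ← add_sum_erase univ _ (mem_univ 0), hzero,
    sum_congr rfl fun z hz => card_filter_mem_polarRadical hF e (ne_of_mem_erase hz)]
  simp [card_erase_of_mem, hF]

theorem sum_sq_card_polarRadical (hF : Fintype.card F = 2 ^ m) (e : ℕ) :
    ∑ a : F, (Fintype.card (polarRadical e a) : ℤ) ^ 2 =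
      (2 ^ m) ^ 2 + (2 ^ m - 1) * ((2 ^ m.gcd (2 * e) + 1) * 2 ^ m.gcd e - 2 ^ m.gcd (2 * e)) := by
  set D : ℤ := 2 ^ m.gcd (2 * e) with hD
  have hsq (a : F) (ha : a ∈ univ.erase 0) : (Fintype.card (polarRadical e a) : ℤ) ^ 2 =
      (D + 1) * Fintype.card (polarRadical e a) - D := by
    rcases card_polarRadical_eq_one_or hF e (ne_of_mem_erase ha) with h | h <;>
      rw [h] <;> push_cast [← hD] <;> ring
  have hsum := sum_card_polarRadical hF e
  rw [← add_sum_erase univ _ (mem_univ 0), card_polarRadical_zero, hF] at hsum ⊢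
  rw [sum_congr rfl hsq, sum_sub_distrib, ← mul_sum, sum_const, card_erase_of_mem (mem_univ _),
    card_univ, hF, nsmul_eq_mul]
  push_cast [Nat.one_le_two_pow] at hsum ⊢
  linear_combination (D + 1) * hsum

end RadicalMoments

section Supports

variable {F : Type*} [Field F] [Fintype F] [DecidableEq F]

/-- The `k`-subsets of `F` that are zero-sum and whose `(1 + 2 ^ e)`-th powers are zero-sum. For
even `k` they correspond to the supports of the weight-`k` words of `CEbar`. -/
def zeroSumSets (F : Type*) [Field F] [Fintype F] [DecidableEq F] (e k : ℕ) : Finset (Finset F) :=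
  {T ∈ powersetCard k univ | ∑ x ∈ T, x = 0 ∧ ∑ x ∈ T, x ^ (1 + 2 ^ e) = 0}

theorem sum_sum_esymm_quadChar {R : Type*} [CommRing R] [IsDomain R] {ψ : AddChar F R}
    (hψ : ψ.IsPrimitive) (e k : ℕ) :
    ∑ a, ∑ b, (univ.val.map (quadChar ψ e a b)).esymm k =
      (Fintype.card F : R) ^ 2 * #(zeroSumSets F e k) := by
  have hprod (a b : F) (T : Finset F) : ∏ x ∈ T, quadChar ψ e a b x =
      ψ (a * ∑ x ∈ T, x ^ (1 + 2 ^ e) + b * ∑ x ∈ T, x) := by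
    rw [mul_sum, mul_sum, ← sum_add_distrib, addChar_map_sum]
    rfl
  calc ∑ a, ∑ b, (univ.val.map (quadChar ψ e a b)).esymm k
      = ∑ T ∈ powersetCard k univ, ∑ a, ∑ b,
          ψ (a * ∑ x ∈ T, x ^ (1 + 2 ^ e) + b * ∑ x ∈ T, x) := by
        simp_rw [esymm_map_val, hprod]
        rw [sum_congr rfl fun a _ => sum_comm, sum_comm]
    _ = ∑ T ∈ zeroSumSets F e k, (Fintype.card F : R) ^ 2 := by
        simp_rw [sum_sum_addChar hψ, zeroSumSets, sum_filter, and_comm]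
    _ = (Fintype.card F : R) ^ 2 * #(zeroSumSets F e k) := by
        rw [sum_const, nsmul_eq_mul, mul_comm]

theorem card_zeroSumSets_six [CharP F 2] {m : ℕ} (hF : Fintype.card F = 2 ^ m) (e : ℕ) :
    720 * (#(zeroSumSets F e 6) : ℤ) =
      2 ^ m * (2 ^ m - 1) * ((2 ^ m) ^ 2 +
        (2 ^ m.gcd (2 * e) * (2 ^ m.gcd e - 1) - 14 * 2 ^ m.gcd e + 16) * 2 ^ m +
          40 * 2 ^ m.gcd e - 64) := by
  let _ : Algebra (ZMod 2) F := ZMod.algebra F 2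
  have hψ := isPrimitive_traceChar (F := F)
  have hcard : (Fintype.card F : ℤ) = 2 ^ m := by rw [hF, Nat.cast_pow, Nat.cast_ofNat]
  set q : ℤ := 2 ^ m
  have hq : q ≠ 0 := by positivity
  set S := weilSum (traceChar F) e
  set w := fun a : F => (Fintype.card (polarRadical e a) : ℤ)
  have hesymm (a b : F) : 720 * (univ.val.map (quadChar (traceChar F) e a b)).esymm 6 =
      (q ^ 2 * w a ^ 2 - (15 * q - 40) * q * w a + (45 * q ^ 2 - 210 * q + 184)) * S a b ^ 2 -
        15 * q * (q - 2) * (q - 4) := by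
    have hnewton := mul_esymm_six (s := univ.val.map (quadChar (traceChar F) e a b))
      (Multiset.forall_mem_map_iff.2 fun x _ => quadChar_sq _ _ _ _ x)
    have hfour := weilSum_pow_four hψ traceChar_sq e a b
    have hS : (univ.val.map (quadChar (traceChar F) e a b)).sum = S a b := rfl
    simp only [Multiset.card_map, card_val, card_univ, hS, hcard] at hnewton hfour
    linear_combination hnewton + (S a b ^ 2 + q * w a - (15 * q - 40)) * hfour
  have hcount : 720 * (q ^ 2 * (#(zeroSumSets F e 6) : ℤ)) =
      (q ^ 2 * ∑ a, w a ^ 2 - (15 * q - 40) * q * ∑ a, w a +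
        (45 * q ^ 2 - 210 * q + 184) * q) * q ^ 2 - 15 * q * (q - 2) * (q - 4) * q ^ 2 := by
    rw [← hcard, ← sum_sum_esymm_quadChar hψ, hcard]
    simp_rw [mul_sum, hesymm, sum_sub_distrib, ← mul_sum, S, sum_sq_weilSum hψ, ← sum_mul,
      sum_add_distrib, sum_sub_distrib, ← mul_sum, sum_const, card_univ, nsmul_eq_mul, hcard]
    ring
  rw [sum_card_polarRadical hF, sum_sq_card_polarRadical hF] at hcount
  apply mul_left_cancel₀ (pow_ne_zero 2 hq)
  linear_combination hcount

end Supports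

section Code

/-- The bijection sending a binary word, viewed as an indicator function, to its support. -/
def supportEquiv (ι : Type*) [Fintype ι] [DecidableEq ι] : (ι → ZMod 2) ≃ Finset ι where
  toFun c := {i | c i ≠ 0}
  invFun T i := if i ∈ T then 1 else 0
  left_inv c := by
    have hbit : ∀ t : ZMod 2, (if t ≠ 0 then 1 else 0) = t := by decide
    funext i
    simp only [mem_filter_univ, hbit]
  right_inv T := by
    ext i
    simp

theorem sum_eq_natCast_hammingNorm {ι : Type*} [Fintype ι] (c : ι → ZMod 2) :
    ∑ i, c i = hammingNorm c := by
  have hbit : ∀ t : ZMod 2, t = if t ≠ 0 then 1 else 0 := by decide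
  rw [hammingNorm, ← sum_boole]
  exact sum_congr rfl fun i _ => hbit (c i)

theorem aeval_codePoly {A : Type*} [Semiring A] [Algebra (ZMod 2) A] {n : ℕ}
    (c : Fin n → ZMod 2) (β : A) : aeval β (codePoly c) = ∑ i with c i ≠ 0, β ^ (i : ℕ) := by
  have hbit (t : ZMod 2) : algebraMap (ZMod 2) A t = if t ≠ 0 then 1 else 0 := by
    rcases (by decide : ∀ t : ZMod 2, t = 0 ∨ t = 1) t with rfl | rfl <;> simp
  simp only [codePoly, map_sum, map_mul, aeval_C, map_pow, aeval_X, sum_filter, hbit, ite_mul,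
    one_mul, zero_mul]

/-- The field element labelling each coordinate of an extended code of length `N`: `α ^ i` for
the `i`-th cyclic coordinate and `0` for the parity coordinate. -/
def locator {F : Type*} [MonoidWithZero F] (N : ℕ) (α : F) (i : Fin N) : F :=
  if (i : ℕ) < N - 1 then α ^ (i : ℕ) else 0

theorem locator_bijective {F : Type*} [Field F] [Fintype F] {N : ℕ} (hF : Fintype.card F = N)
    {α : F} (hα : orderOf α = N - 1) : Function.Bijective (locator N α) := by
  have hα₀ : α ≠ 0 := by
    rintro rfl
    have := Fintype.one_lt_card (α := F)
    rw [orderOf_zero] at hα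
    omega
  refine (Fintype.bijective_iff_injective_and_card _).2 ⟨fun i j hij => Fin.ext ?_, by simp [hF]⟩
  simp only [locator] at hij
  split_ifs at hij with hi hj hj
  · exact pow_injOn_Iio_orderOf (hα ▸ hi) (hα ▸ hj) hij
  · exact absurd hij (pow_ne_zero _ hα₀)
  · exact absurd hij.symm (pow_ne_zero _ hα₀)
  · omega

theorem aeval_pow_codePoly_castLE {F : Type*} [Field F] [Algebra (ZMod 2) F] {N : ℕ} (α : F)
    (c : Fin N → ZMod 2) {k : ℕ} (hk : k ≠ 0) :
    aeval (α ^ k) (codePoly fun i : Fin (N - 1) => c (Fin.castLE (Nat.sub_le _ _) i)) =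
      ∑ i with c i ≠ 0, locator N α i ^ k := by
  rw [aeval_codePoly, sum_filter, sum_filter]
  refine Fintype.sum_of_injective _ (Fin.castLE_injective (Nat.sub_le N 1)) _ _
    (fun i hi => ?_) fun i => ?_
  · have hlast : ¬ (i : ℕ) < N - 1 := fun h => hi ⟨⟨i, h⟩, rfl⟩
    simp [locator, hlast, hk]
  · simp [locator, ← pow_mul, mul_comm]

/-- The bijection sending a word to the set of field elements labelling its support. -/
noncomputable def locatorSetEquiv {F : Type*} [Field F] [Fintype F] {N : ℕ}
    (hF : Fintype.card F = N) {α : F} (hα : orderOf α = N - 1) : (Fin N → ZMod 2) ≃ Finset F :=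
  (supportEquiv (Fin N)).trans (Equiv.ofBijective _ (locator_bijective hF hα)).finsetCongr

theorem card_locatorSetEquiv {F : Type*} [Field F] [Fintype F] {N : ℕ}
    (hF : Fintype.card F = N) {α : F} (hα : orderOf α = N - 1) (c : Fin N → ZMod 2) :
    #(locatorSetEquiv hF hα c) = hammingNorm c :=
  card_map _

theorem sum_locatorSetEquiv_pow {F : Type*} [Field F] [Fintype F] [Algebra (ZMod 2) F] {N : ℕ}
    (hF : Fintype.card F = N) {α : F} (hα : orderOf α = N - 1) (c : Fin N → ZMod 2) {k : ℕ}
    (hk : k ≠ 0) :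
    ∑ x ∈ locatorSetEquiv hF hα c, x ^ k =
      aeval (α ^ k) (codePoly fun i : Fin (N - 1) => c (Fin.castLE (Nat.sub_le _ _) i)) :=
  (sum_map _ _ _).trans (aeval_pow_codePoly_castLE α c hk).symm

theorem dvd_of_aeval_pow_minpoly_eq_zero {F : Type*} [Field F] [Fintype F] [Algebra (ZMod 2) F]
    {m e : ℕ} (hF : Fintype.card F = 2 ^ m) {α : F} (hα : orderOf α = 2 ^ m - 1)
    (h : aeval (α ^ (1 + 2 ^ e)) (minpoly (ZMod 2) α) = 0) : m ∣ e := by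
  classical
  have : CharP F 2 := charP_of_injective_algebraMap (algebraMap (ZMod 2) F).injective 2
  obtain ⟨σ, hσ⟩ := minpoly.exists_algEquiv_of_root' (Algebra.IsAlgebraic.isAlgebraic α) h
  have hpow (x : F) : σ x = x ^ (1 + 2 ^ e) := by
    obtain ⟨i, rfl⟩ := (locator_bijective hF hα).2 x
    rw [locator]
    split_ifs
    · rw [map_pow, hσ, ← pow_mul, ← pow_mul, mul_comm]
    · simp
  have hfix (x : F) : x ^ 2 ^ e = x := by
    have hadd := map_add σ x 1
    rw [hpow, hpow, map_one, pow_add _ 1, add_pow_char_pow, pow_add _ 1] at hadd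
    have hzero : x ^ 2 ^ e + x = 0 := by linear_combination hadd
    exact CharTwo.add_eq_zero.1 hzero
  have hcard := card_filter_pow_pow_eq_self hF e
  rw [filter_true_of_mem fun x _ => hfix x, card_univ, hF] at hcard
  exact Nat.gcd_eq_left_iff_dvd.1 (Nat.pow_right_injective le_rfl hcard).symm

theorem gE_dvd_iff {m e : ℕ} [Fintype (GaloisField 2 m)]
    (hF : Fintype.card (GaloisField 2 m) = 2 ^ m) (hme : ¬ m ∣ e) {α : GaloisField 2 m}
    (hα : orderOf α = 2 ^ m - 1) (p : (ZMod 2)[X]) :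
    gE m e α ∣ p ↔ aeval α p = 0 ∧ aeval (α ^ (1 + 2 ^ e)) p = 0 := by
  have hcop : IsCoprime (minpoly (ZMod 2) α) (minpoly (ZMod 2) (α ^ (1 + 2 ^ e))) :=
    ((minpoly.irreducible (Algebra.IsIntegral.isIntegral _)).coprime_iff_not_dvd.2 fun h =>
      hme (dvd_of_aeval_pow_minpoly_eq_zero hF hα (minpoly.dvd_iff.1 h))).symm
  rw [gE, ← minpoly.dvd_iff, ← minpoly.dvd_iff]
  exact ⟨fun h => ⟨dvd_of_mul_right_dvd h, dvd_of_mul_left_dvd h⟩, fun h => hcop.mul_dvd h.1 h.2⟩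

theorem mem_CEbar_and_hammingNorm_eq_iff {m e k : ℕ} [Fintype (GaloisField 2 m)]
    [DecidableEq (GaloisField 2 m)] (hF : Fintype.card (GaloisField 2 m) = 2 ^ m)
    (hme : ¬ m ∣ e) (hk : Even k) {α : GaloisField 2 m} (hα : orderOf α = 2 ^ m - 1)
    (c : Fin (2 ^ m) → ZMod 2) :
    c ∈ CEbar m e α ∧ hammingNorm c = k ↔
      locatorSetEquiv hF hα c ∈ zeroSumSets (GaloisField 2 m) e k := by
  have hsum := sum_locatorSetEquiv_pow hF hα c one_ne_zero
  simp only [pow_one] at hsum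
  rw [zeroSumSets, mem_filter, mem_powersetCard_univ, card_locatorSetEquiv, hsum,
    sum_locatorSetEquiv_pow hF hα c (by positivity), ← gE_dvd_iff hF hme hα, and_comm]
  refine and_congr_right fun hwt => and_iff_left_of_imp fun _ => ?_
  rw [sum_eq_natCast_hammingNorm, hwt, ZMod.natCast_eq_zero_iff_even.2 hk]

theorem ncard_CEbar_hammingNorm_eq {m e k : ℕ} [Fintype (GaloisField 2 m)]
    [DecidableEq (GaloisField 2 m)] (hF : Fintype.card (GaloisField 2 m) = 2 ^ m)
    (hme : ¬ m ∣ e) (hk : Even k) {α : GaloisField 2 m} (hα : orderOf α = 2 ^ m - 1) :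
    {c : Fin (2 ^ m) → ZMod 2 | c ∈ CEbar m e α ∧ hammingNorm c = k}.ncard =
      #(zeroSumSets (GaloisField 2 m) e k) := by
  rw [← Nat.card_coe_set_eq, ← Nat.card_eq_finsetCard]
  exact Nat.card_congr ((locatorSetEquiv hF hα).subtypeEquiv
    (mem_CEbar_and_hammingNorm_eq_iff hF hme hk hα))

end Code

theorem number_of_weight_six_codewords_general (m e : ℕ) (hm : m ≠ 0) (hme : ¬ m ∣ e)
    (α : GaloisField 2 m) (hα : orderOf α = 2 ^ m - 1) :
    720 * ({c : Fin (2 ^ m) → ZMod 2 | c ∈ CEbar m e α ∧ hammingNorm c = 6}.ncard : ℤ) =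
      2 ^ m * (2 ^ m - 1) * ((2 ^ m) ^ 2 +
        (2 ^ m.gcd (2 * e) * (2 ^ m.gcd e - 1) - 14 * 2 ^ m.gcd e + 16) * 2 ^ m +
          40 * 2 ^ m.gcd e - 64) := by
  classical
  have := Fintype.ofFinite (GaloisField 2 m)
  have hF : Fintype.card (GaloisField 2 m) = 2 ^ m := by
    rw [← Nat.card_eq_fintype_card, GaloisField.card 2 m hm]
  rw [ncard_CEbar_hammingNorm_eq hF hme (by decide) hα, card_zeroSumSets_six hF]

theorem gcd_two_mul_eq_four {m e : ℕ} (hm : 4 ∣ m) (hgcd : m.gcd e = 2) : m.gcd (2 * e) = 4 := by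
  have he : 2 ∣ e := hgcd ▸ m.gcd_dvd_right e
  refine Nat.dvd_antisymm ?_ (Nat.dvd_gcd hm (Nat.mul_dvd_mul_left 2 he))
  calc m.gcd (2 * e) ∣ m.gcd 2 * m.gcd e := Nat.gcd_mul_right_dvd_mul_gcd _ _ _
    _ ∣ 2 * 2 := Nat.mul_dvd_mul (m.gcd_dvd_right 2) hgcd.dvd

theorem forty_five_mul_eq_of_mul_eq {m N : ℕ} (hm : 2 ≤ m)
    (h : 720 * (N : ℤ) = 2 ^ m * (2 ^ m - 1) * ((2 ^ m) ^ 2 + 8 * 2 ^ m + 96)) :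
    45 * N = 2 ^ m * (2 ^ m - 1) * (2 ^ (2 * m - 4) + 2 ^ (m - 1) + 6) := by
  have hsq : (2 : ℤ) ^ m * 2 ^ m = 16 * 2 ^ (2 * m - 4) := by
    rw [← pow_add, show (16 : ℤ) = 2 ^ 4 by norm_num, ← pow_add]
    congr 1
    omega
  have hhalf : (2 : ℤ) ^ m = 2 * 2 ^ (m - 1) := by
    rw [← pow_succ', Nat.sub_add_cancel (by omega)]
  zify [Nat.one_le_two_pow (n := m)]
  apply mul_left_cancel₀ (show (16 : ℤ) ≠ 0 by norm_num)
  linear_combination h + 2 ^ m * (2 ^ m - 1) * (hsq + 8 * hhalf)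

/-- For `m ≡ 0 (mod 4)` (with `m ≥ 4`) and `1 ≤ e ≤ m/2` with
`gcd(m,e) = 2`, the number of weight-6 codewords of `C̄_E` is
`Ā₆ = 2^m(2^m − 1)(2^{2m−4} + 2^{m−1} + 6)/45`. -/
theorem number_of_weight_six_codewords
    (m e : ℕ) (hm4 : m % 4 = 0) (hm : 4 ≤ m)
    (he1 : 1 ≤ e) (heM : 2 * e ≤ m) (hgcd : Nat.gcd m e = 2)
    (α : GaloisField 2 m) (hα : orderOf α = 2 ^ m - 1) :
    45 * {c : Fin (2 ^ m) → ZMod 2 | c ∈ CEbar m e α ∧ hammingNorm c = 6}.ncard =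
      2 ^ m * (2 ^ m - 1) * (2 ^ (2 * m - 4) + 2 ^ (m - 1) + 6) := by
  have hme : ¬ m ∣ e := fun h => by
    rw [Nat.gcd_eq_left h] at hgcd
    omega
  refine forty_five_mul_eq_of_mul_eq (by omega) ?_
  rw [number_of_weight_six_codewords_general m e (by omega) hme α hα, hgcd,
    gcd_two_mul_eq_four (Nat.dvd_of_mod_eq_zero hm4) hgcd]
  ring
end

section
/- Let C be a linear code of length v and dimension κ over the finite field F_q, with weight distribution (A_0, A_1, …, A_v), and let (A_0^⊥, …, A_v^⊥) be the weight distribution of its dual code C^⊥. Then the weight enumerators satisfy the MacWilliams identity: as polynomials in z, q^κ · ∑_{i=0}^{v} A_i^⊥ z^i = ∑_{i=0}^{v} A_i (1 − z)^i (1 + (q − 1)z)^{v−i}. -/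
open Polynomial Finset

/-- The dual of a set of vectors over a commutative ring, as a submodule. -/
def dualCode {n : ℕ} {F : Type*} [CommRing F] (C : Set (Fin n → F)) :
    Submodule F (Fin n → F) where
  carrier := {y | ∀ c ∈ C, ∑ i, y i * c i = 0}
  add_mem' := by
    intro a b ha hb c hc
    have h1 := ha c hc
    have h2 := hb c hc
    simp only [Pi.add_apply, add_mul, Finset.sum_add_distrib, h1, h2, add_zero]
  zero_mem' := by intro c hc; simp
  smul_mem' := by
    intro r a ha c hc
    have h1 := ha c hc
    simp only [Pi.smul_apply, smul_eq_mul, mul_assoc, ← Finset.mul_sum, h1, mul_zero]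

/-!
Fix a primitive additive character `ψ` of the finite ring `R`. The identity is Poisson summation
on `Rᵛ` for the function `y ↦ z ^ wt y`. On one side, summing `ψ (y ⬝ᵥ c)` over `c ∈ C` detects
whether `y` lies in the dual code, by orthogonality of characters on `C`. On the other side,
`z ^ wt y` is a product of functions of the single coordinates, so its Fourier transform at `c`
factors too: a coordinate contributes `1 - z` where `c` is nonzero and `1 + (|R| - 1) z` where `c`
vanishes. Read at integers `z`, this is an identity in `ℤ[X]`, which specializes to every
commutative ring.
-/

/-- The weight distribution of a code `C`: the number `A_i` of codewords of Hamming weight `i`. -/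
noncomputable def weightDistribution {ι R : Type*} [Fintype ι] [Zero R] [DecidableEq R]
    (C : Set (ι → R)) (i : ℕ) : ℕ :=
  {c : ι → R | c ∈ C ∧ hammingNorm c = i}.ncard

section HammingNorm

variable {ι R S : Type*} [Fintype ι] [Zero R] [DecidableEq R]

theorem sum_weightDistribution_mul {B : Type*} [SetLike B (ι → R)] [NonAssocSemiring S] (C : B)
    [Fintype C] (g : ℕ → S) :
    ∑ i ∈ range (Fintype.card ι + 1), (weightDistribution (C : Set (ι → R)) i : S) * g i =
      ∑ c : C, g (hammingNorm (c : ι → R)) := by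
  have card_fiber (i : ℕ) :
      weightDistribution (C : Set (ι → R)) i = #{c : C | hammingNorm (c : ι → R) = i} := by
    rw [← card_map (Function.Embedding.subtype (· ∈ C)), ← Set.ncard_coe_finset,
      weightDistribution]
    congr 1
    ext c
    simp [and_comm]
  have weight_mem_range (c : C) (_ : c ∈ univ) :
      hammingNorm (c : ι → R) ∈ range (Fintype.card ι + 1) :=
    mem_range_succ_iff.mpr hammingNorm_le_card_fintype
  rw [← sum_fiberwise_of_maps_to' weight_mem_range g]
  simp only [card_fiber, sum_const, nsmul_eq_mul]

theorem prod_ite_ne_zero_eq_pow_hammingNorm [CommMonoid S] (c : ι → R) (a b : S) :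
    ∏ i, (if c i ≠ 0 then a else b) =
      a ^ hammingNorm c * b ^ (Fintype.card ι - hammingNorm c) := by
  classical
  have card_zeros : #{i | ¬c i ≠ 0} = Fintype.card ι - hammingNorm c := by
    rw [filter_not, ← compl_eq_univ_sdiff, card_compl]
    rfl
  rw [prod_ite, prod_const, prod_const, card_zeros]
  rfl

end HammingNorm

theorem addChar_sum_eq_prod {ι A M : Type*} [AddCommMonoid A] [CommMonoid M] (ψ : AddChar A M)
    (s : Finset ι) (f : ι → A) : ψ (∑ i ∈ s, f i) = ∏ i ∈ s, ψ (f i) :=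
  map_prod ψ.toMonoidHom (fun i => Multiplicative.ofAdd (f i)) s

section Fourier

variable {ι R K : Type*} [Fintype ι] [CommRing R] [Fintype R] [DecidableEq R] [CommRing K]
  [IsDomain K] {ψ : AddChar R K}

theorem sum_addChar_mul_ite_ne_zero (hψ : ψ.IsPrimitive) (z : K) (b : R) :
    ∑ a, ψ (a * b) * (if a ≠ 0 then z else 1) =
      if b ≠ 0 then 1 - z else 1 + ((Fintype.card R : K) - 1) * z := by
  have split_at_zero (a : R) :
      ψ (a * b) * (if a ≠ 0 then z else 1) = ψ (a * b) * z + if a = 0 then 1 - z else 0 := by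
    by_cases ha : a = 0 <;> simp [ha]
  simp only [split_at_zero, sum_add_distrib, ← sum_mul, AddChar.sum_mulShift b hψ, sum_ite_eq',
    mem_univ, if_true]
  by_cases hb : b = 0
  · rw [if_pos hb, if_neg (not_not.mpr hb)]
    ring
  · rw [if_neg hb, if_pos hb, Nat.cast_zero, zero_mul, zero_add]

theorem sum_addChar_dotProduct_mul_pow_hammingNorm [DecidableEq ι] (hψ : ψ.IsPrimitive) (z : K)
    (c : ι → R) :
    ∑ y : ι → R, ψ (y ⬝ᵥ c) * z ^ hammingNorm y =
      (1 - z) ^ hammingNorm c *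
        (1 + ((Fintype.card R : K) - 1) * z) ^ (Fintype.card ι - hammingNorm c) := by
  have factor (y : ι → R) :
      ψ (y ⬝ᵥ c) * z ^ hammingNorm y = ∏ i, ψ (y i * c i) * (if y i ≠ 0 then z else 1) := by
    rw [prod_mul_distrib, prod_ite_ne_zero_eq_pow_hammingNorm, one_pow, mul_one, dotProduct,
      addChar_sum_eq_prod]
  calc ∑ y : ι → R, ψ (y ⬝ᵥ c) * z ^ hammingNorm y
    _ = ∏ i, ∑ a, ψ (a * c i) * (if a ≠ 0 then z else 1) := by
      simp only [factor]
      exact (Fintype.prod_sum fun i a => ψ (a * c i) * (if a ≠ 0 then z else 1)).symm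
    _ = ∏ i, if c i ≠ 0 then 1 - z else 1 + ((Fintype.card R : K) - 1) * z := by
      simp only [sum_addChar_mul_ite_ne_zero hψ]
    _ = _ := prod_ite_ne_zero_eq_pow_hammingNorm c _ _

end Fourier

section DualCode

variable {n : ℕ} {R K : Type*} [CommRing R]

theorem mem_dualCode_iff_forall_addChar_eq_one [CommMonoid K] {ψ : AddChar R K}
    (hψ : ψ.IsPrimitive) (C : Submodule R (Fin n → R)) (y : Fin n → R) :
    y ∈ dualCode (C : Set (Fin n → R)) ↔ ∀ c ∈ C, ψ (y ⬝ᵥ c) = 1 := by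
  refine ⟨fun hy c hc => ?_, fun h c hc => ?_⟩
  · rw [show y ⬝ᵥ c = 0 from hy c hc, ψ.map_zero_eq_one]
  · by_contra hyc
    refine hψ hyc (AddChar.eq_one_iff.mpr fun a => ?_)
    -- `C` is closed under scalars, so the values `y ⬝ᵥ c` form an ideal of `R`.
    have hac := h (a • c) (C.smul_mem a hc)
    rwa [dotProduct_smul, smul_eq_mul, mul_comm] at hac

variable [CommRing K] [IsDomain K] {ψ : AddChar R K}

theorem sum_addChar_dotProduct_eq_ite (hψ : ψ.IsPrimitive) (C : Submodule R (Fin n → R))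
    [Fintype C] (y : Fin n → R) [Decidable (y ∈ dualCode (C : Set (Fin n → R)))] :
    ∑ c : C, ψ (y ⬝ᵥ (c : Fin n → R)) =
      if y ∈ dualCode (C : Set (Fin n → R)) then (Fintype.card C : K) else 0 := by
  classical
  let χ : AddChar C K :=
    ψ.compAddMonoidHom ((dotProductBilin R R y).comp C.subtype).toAddMonoidHom
  have trivial_iff : χ = 0 ↔ y ∈ dualCode (C : Set (Fin n → R)) := by
    rw [mem_dualCode_iff_forall_addChar_eq_one hψ, AddChar.eq_zero_iff]
    exact Subtype.forall
  simp only [← trivial_iff]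
  exact χ.sum_eq_ite

theorem poisson_summation_dualCode [Fintype R] (hψ : ψ.IsPrimitive)
    (C : Submodule R (Fin n → R)) [Fintype C] [Fintype (dualCode (C : Set (Fin n → R)))]
    (f : (Fin n → R) → K) :
    ∑ c : C, ∑ y : Fin n → R, ψ (y ⬝ᵥ (c : Fin n → R)) * f y =
      (Fintype.card C : K) * ∑ y : dualCode (C : Set (Fin n → R)), f y := by
  classical
  rw [sum_comm]
  simp only [← sum_mul, sum_addChar_dotProduct_eq_ite hψ, ite_mul, zero_mul]
  rw [← sum_filter, ← mul_sum, sum_subtype _ fun y => mem_filter_univ y]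

variable [Fintype R] [DecidableEq R]

theorem card_mul_sum_weightDistribution_dualCode (hψ : ψ.IsPrimitive)
    (C : Submodule R (Fin n → R)) (z : K) :
    (Nat.card C : K) * ∑ i ∈ range (n + 1),
        (weightDistribution (dualCode (C : Set (Fin n → R)) : Set (Fin n → R)) i : K) * z ^ i =
      ∑ i ∈ range (n + 1), (weightDistribution (C : Set (Fin n → R)) i : K) *
        ((1 - z) ^ i * (1 + ((Fintype.card R : K) - 1) * z) ^ (n - i)) := by
  classical
  have regroup (D : Submodule R (Fin n → R)) (g : ℕ → K) :
      ∑ i ∈ range (n + 1), (weightDistribution (D : Set (Fin n → R)) i : K) * g i =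
        ∑ c : D, g (hammingNorm (c : Fin n → R)) := by
    simpa only [Fintype.card_fin] using
      sum_weightDistribution_mul D g
  have fourier (c : Fin n → R) := sum_addChar_dotProduct_mul_pow_hammingNorm hψ z c
  simp only [Fintype.card_fin] at fourier
  simp only [regroup, ← fourier]
  rw [Nat.card_eq_fintype_card]
  exact (poisson_summation_dualCode hψ C fun y => z ^ hammingNorm y).symm

/-- For `K = ℂ`, a primitive `ψ` exists exactly when `R` is a Frobenius ring. -/
theorem macwilliams_identity_general [CharZero K] (hψ : ψ.IsPrimitive)
    (C : Submodule R (Fin n → R)) {S : Type*} [CommRing S] (z : S) :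
    (Nat.card C : S) * ∑ i ∈ range (n + 1),
        (weightDistribution (dualCode (C : Set (Fin n → R)) : Set (Fin n → R)) i : S) * z ^ i =
      ∑ i ∈ range (n + 1), (weightDistribution (C : Set (Fin n → R)) i : S) *
        (1 - z) ^ i * (1 + ((Fintype.card R : S) - 1) * z) ^ (n - i) := by
  have polynomial_identity :
      (Nat.card C : ℤ[X]) * ∑ i ∈ range (n + 1),
          (weightDistribution (dualCode (C : Set (Fin n → R)) : Set (Fin n → R)) i : ℤ[X]) *
            X ^ i =
        ∑ i ∈ range (n + 1), (weightDistribution (C : Set (Fin n → R)) i : ℤ[X]) *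
          ((1 - X) ^ i * (1 + ((Fintype.card R : ℤ[X]) - 1) * X) ^ (n - i)) := by
    refine Polynomial.funext fun m => ?_
    have at_integer := card_mul_sum_weightDistribution_dualCode hψ C (m : K)
    simp only [eval_mul, eval_finsetSum, eval_pow, eval_add, eval_sub, eval_natCast, eval_one,
      eval_X]
    exact_mod_cast at_integer
  simpa [← mul_assoc] using congrArg (aeval z) polynomial_identity

end DualCode

/-- **MacWilliams identity.** If `C` is a `κ`-dimensional linear code of
length `v` over `F_q` with weight distribution `A_i`, and `A_i^⊥` is the weight
distribution of its dual, then for all `z`,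
`q^κ · ∑ A_i^⊥ z^i = ∑ A_i (1 − z)^i (1 + (q − 1)z)^{v−i}`. -/
theorem macwilliams_identity
    (q v κ : ℕ) (hq : ∃ p s : ℕ, p.Prime ∧ 0 < s ∧ q = p ^ s)
    (F : Type) [Field F] [Fintype F] [DecidableEq F] (hF : Fintype.card F = q)
    (C : Submodule F (Fin v → F)) (hκ : Module.finrank F ↥C = κ)
    (A Adual : ℕ → ℕ)
    (hA : ∀ i, A i = {c : Fin v → F | c ∈ C ∧ hammingNorm c = i}.ncard)
    (hAdual : ∀ i, Adual i =
      {y : Fin v → F | y ∈ dualCode (C : Set (Fin v → F)) ∧ hammingNorm y = i}.ncard) :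
    ∀ z : ℚ,
      (q : ℚ) ^ κ * ∑ i ∈ Finset.range (v + 1), (Adual i : ℚ) * z ^ i =
      ∑ i ∈ Finset.range (v + 1),
        (A i : ℚ) * (1 - z) ^ i * (1 + ((q : ℚ) - 1) * z) ^ (v - i) := by
  intro z
  obtain rfl : A = weightDistribution (C : Set (Fin v → F)) := funext hA
  obtain rfl : Adual = weightDistribution (dualCode (C : Set (Fin v → F)) : Set (Fin v → F)) :=
    funext hAdual
  have card_code : Nat.card C = q ^ κ := by
    rw [Module.natCard_eq_pow_finrank (K := F), Nat.card_eq_fintype_card, hF, hκ]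
  simpa only [card_code, hF, Nat.cast_pow] using macwilliams_identity_general
    (AddChar.FiniteField.primitiveChar_to_Complex_isPrimitive F) C z
end

section
/- (Assmus–Mattson Theorem) Let C be a linear code of length v over F_q with minimum nonzero Hamming weight d, and let d^⊥ be the minimum nonzero Hamming weight of C^⊥. Let w be the largest integer with w ≤ v satisfying w − ⌊(w + q − 2)/(q − 1)⌋ < d, and let w^⊥ be the largest integer with w^⊥ ≤ v satisfying w^⊥ − ⌊(w^⊥ + q − 2)/(q − 1)⌋ < d^⊥. Fix a positive integer t with t < d, and let s be the number of indices i with 0 ≤ i ≤ v − t such that A_i^⊥ ≠ 0. Suppose s ≤ d − t. Then: (1) for every i with A_i ≠ 0 and d ≤ i ≤ w, the supports of the codewords of weight i in C form a t-design; and (2) for every i with A_i^⊥ ≠ 0 and d^⊥ ≤ i ≤ min{v − t, w^⊥}, the supports of the codewords of weight i in C^⊥ form a t-design. -/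
/-!
Count the words of a code by their sets of zeros, and regard the counts as weights on the subsets of
the coordinate set. The number of words of `C^⊥` vanishing on `S` is, up to a factor depending only
on `#S`, the number of words of `C` vanishing off `S`. For `#S < d` only the zero word does, so the
number of words of `C^⊥` vanishing on `S` then depends only on `#S`. Fix a set `T` of `t`
coordinates. Summing over the sets `S ⊇ T` of size `t + m < d` gives the `m`-th binomial moment of
the weight distribution of the words of `C^⊥` vanishing on `T`. There are at least as many moments
as weights, so the moments determine this distribution, independently of `T`: the zero sets of each
size of the words of `C^⊥` form a weighted `t`-design.

Weighted designs are stable under the zeta transform, its inverse and complementation, which carries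
the property from `C^⊥` to `C` and from zero sets to supports. Finally, two words with the same
support of size `i` agree, after rescaling one of them suitably, in at least
`⌈i / (q - 1)⌉ = ⌊(i + q - 2) / (q - 1)⌋` coordinates of the support, so below the threshold they
are proportional and each support is counted exactly `q - 1` times.
-/

open Polynomial Finset

section BinomialMoments

theorem eq_zero_of_sum_mul_choose_eq_zero {R : Type*} [CommRing R] [IsDomain R] [CharZero R]
    {J : Finset ℕ} {f : ℕ → R} (hf : ∀ m < #J, ∑ j ∈ J, f j * (j.choose m : R) = 0) :
    ∀ j ∈ J, f j = 0 := by
  let e : Fin #J ≃ J := J.equivFin.symm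
  let M : Matrix (Fin #J) (Fin #J) R :=
    .of fun i m => (descPochhammer R m).eval ((e i : ℕ) : R)
  have hM : M.det ≠ 0 := by
    rw [← Matrix.det_eval_matrixOfPolynomials_eq_det_vandermonde (fun i => ((e i : ℕ) : R)) _
      (fun m => descPochhammer_natDegree R m) (fun m => monic_descPochhammer R m)]
    exact Matrix.det_vandermonde_ne_zero_iff.mpr
      (Nat.cast_injective.comp (Subtype.val_injective.comp e.injective))
  have hfM : Matrix.vecMul (fun i => f (e i)) M = 0 := by
    ext m
    calc ∑ i, f (e i) * (descPochhammer R m).eval ((e i : ℕ) : R)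
        = ∑ j : J, f j * (descPochhammer R m).eval ((j : ℕ) : R) :=
          e.sum_comp fun j : J => f j * (descPochhammer R m).eval ((j : ℕ) : R)
      _ = ((m : ℕ).factorial : R) * ∑ j ∈ J, f j * (j.choose m : R) := by
          rw [sum_coe_sort J fun j => f j * (descPochhammer R m).eval (j : R), mul_sum]
          refine sum_congr rfl fun j _ => ?_
          rw [descPochhammer_eval_eq_descFactorial, Nat.descFactorial_eq_factorial_mul_choose]
          push_cast
          ring
      _ = 0 := by rw [hf m m.2, mul_zero]
  intro j hj
  simpa using congrFun (Matrix.eq_zero_of_vecMul_eq_zero hM hfM) (e.symm ⟨j, hj⟩)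

end BinomialMoments

section WeightedDesigns

variable {ι R : Type*} [Fintype ι] [DecidableEq ι]

section AddCommMonoid

variable [AddCommMonoid R]

/-- The total weight of the `k`-subsets of `ι` that contain `T`. -/
def coverWeight (μ : Finset ι → R) (k : ℕ) (T : Finset ι) : R :=
  ∑ A with #A = k ∧ T ⊆ A, μ A

/-- The `k`-subsets of `ι`, taken with weights `μ`, form a `t`-design. -/
def IsWeightedDesign (μ : Finset ι → R) (t k : ℕ) : Prop :=
  ∃ lam, ∀ T : Finset ι, #T = t → coverWeight μ k T = lam

/-- The zeta transform of `μ` on the lattice of subsets of `ι`: the total weight of the sets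
containing `S`. -/
def upperSum (μ : Finset ι → R) (S : Finset ι) : R :=
  ∑ A with S ⊆ A, μ A

variable {μ : Finset ι → R} {t k : ℕ}

theorem coverWeight_eq_zero_of_lt_card {T : Finset ι} (h : k < #T) : coverWeight μ k T = 0 := by
  refine sum_eq_zero fun A hA => ?_
  obtain ⟨-, hAk, hTA⟩ := mem_filter.mp hA
  have := card_le_card hTA
  omega

theorem coverWeight_eq_zero_of_card_lt (h : Fintype.card ι < k) (T : Finset ι) :
    coverWeight μ k T = 0 := by
  refine sum_eq_zero fun A hA => ?_
  have := card_le_univ A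
  have := (mem_filter.mp hA).2.1
  omega

theorem isWeightedDesign_iff_forall_coverWeight_eq :
    IsWeightedDesign μ t k ↔
      ∀ T T' : Finset ι, #T = t → #T' = t → coverWeight μ k T = coverWeight μ k T' := by
  constructor
  · rintro ⟨lam, h⟩ T T' hT hT'
    rw [h T hT, h T' hT']
  · intro h
    exact (Set.pairwise_eq_iff_exists_eq {T : Finset ι | #T = t} _).mp
      fun T hT T' hT' _ => h T T' hT hT'

end AddCommMonoid

section Semiring

variable [Semiring R] {μ : Finset ι → R} {t k : ℕ}

theorem IsWeightedDesign.of_eq_mul {ν : Finset ι → R} (h : IsWeightedDesign μ t k) (a : R)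
    (hν : ∀ A, #A = k → ν A = a * μ A) : IsWeightedDesign ν t k := by
  obtain ⟨lam, hlam⟩ := h
  refine ⟨a * lam, fun T hT => ?_⟩
  rw [← hlam T hT, coverWeight, coverWeight, mul_sum]
  exact sum_congr rfl fun A hA => hν A (mem_filter.mp hA).2.1

theorem card_filter_card_eq_add_subset_subset {T A : Finset ι} (h : T ⊆ A) (m : ℕ) :
    #{U | (#U = #T + m ∧ T ⊆ U) ∧ U ⊆ A} = (#A - #T).choose m := by
  rw [← card_sdiff_of_subset h, ← card_powersetCard]
  refine card_nbij' (· \ T) (T ∪ ·) ?_ ?_ ?_ ?_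
  · simp only [Set.MapsTo, coe_filter, mem_univ, true_and, Set.mem_ofPred_eq, mem_coe,
      mem_powersetCard]
    rintro U ⟨⟨hU, hTU⟩, hUA⟩
    exact ⟨sdiff_subset_sdiff hUA Subset.rfl, by rw [card_sdiff_of_subset hTU]; omega⟩
  · simp only [Set.MapsTo, coe_filter, mem_univ, true_and, Set.mem_ofPred_eq, mem_coe,
      mem_powersetCard]
    rintro U ⟨hU, rfl⟩
    refine ⟨⟨card_union_of_disjoint ?_, subset_union_left⟩,
      union_subset h (hU.trans sdiff_subset)⟩
    exact disjoint_sdiff.mono_right hU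
  · intro U hU
    exact union_sdiff_of_subset (mem_filter.mp hU).2.1.2
  · intro U hU
    exact union_sdiff_cancel_left (disjoint_sdiff.mono_right (mem_powersetCard.mp hU).1)

theorem isWeightedDesign_one (t m : ℕ) : IsWeightedDesign (1 : Finset ι → R) t (t + m) := by
  refine ⟨((Fintype.card ι - t).choose m : R), ?_⟩
  rintro T rfl
  simpa [coverWeight] using congrArg (Nat.cast : ℕ → R)
    (card_filter_card_eq_add_subset_subset (subset_univ T) m)

theorem coverWeight_upperSum_eq_sum_mul_choose_card_sub (μ : Finset ι → R) (T : Finset ι) (m : ℕ) :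
    coverWeight (upperSum μ) (#T + m) T =
      ∑ A with T ⊆ A, μ A * ((#A - #T).choose m : R) := by
  calc ∑ U with #U = #T + m ∧ T ⊆ U, ∑ A with U ⊆ A, μ A
      = ∑ A with T ⊆ A, ∑ U with (#U = #T + m ∧ T ⊆ U) ∧ U ⊆ A, μ A := by
        refine sum_comm' fun U A => ?_
        simp only [mem_filter, mem_univ, true_and]
        exact ⟨fun h => ⟨h, h.1.2.trans h.2⟩, fun h => h.1⟩
    _ = ∑ A with T ⊆ A, μ A * ((#A - #T).choose m : R) := by
        refine sum_congr rfl fun A hA => ?_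
        rw [sum_const, card_filter_card_eq_add_subset_subset (mem_filter.mp hA).2, nsmul_eq_mul,
          Nat.cast_comm]

theorem coverWeight_upperSum {T : Finset ι} {J : Finset ℕ}
    (hJ : ∀ j ∉ J, coverWeight μ (#T + j) T = 0) (m : ℕ) :
    coverWeight (upperSum μ) (#T + m) T =
      ∑ j ∈ J, coverWeight μ (#T + j) T * (j.choose m : R) := by
  calc coverWeight (upperSum μ) (#T + m) T
      = ∑ A with T ⊆ A, μ A * ((#A - #T).choose m : R) :=
        coverWeight_upperSum_eq_sum_mul_choose_card_sub μ T m
    _ = ∑ j ∈ range (Fintype.card ι + 1),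
          ∑ A with T ⊆ A ∧ #A - #T = j, μ A * ((#A - #T).choose m : R) := by
        simp_rw [← filter_filter]
        refine (sum_fiberwise_of_maps_to (fun A _ => mem_range.mpr ?_) _).symm
        have := card_le_univ A
        omega
    _ = ∑ j ∈ range (Fintype.card ι + 1), coverWeight μ (#T + j) T * (j.choose m : R) := by
        refine sum_congr rfl fun j _ => ?_
        rw [coverWeight, sum_mul]
        refine sum_congr (filter_congr fun A _ => ?_) fun A hA => ?_
        · rw [and_comm, and_congr_left_iff]
          intro hTA
          have := card_le_card hTA
          omega
        · rw [(mem_filter.mp hA).2.1, Nat.add_sub_cancel_left]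
    _ = ∑ j ∈ J, coverWeight μ (#T + j) T * (j.choose m : R) := by
        refine sum_congr_of_eq_on_inter (fun j _ hj => ?_) (fun j _ hj => ?_) fun _ _ _ => rfl
        · rw [hJ j hj, zero_mul]
        · rw [mem_range] at hj
          rw [coverWeight_eq_zero_of_card_lt (by omega), zero_mul]

protected theorem IsWeightedDesign.upperSum (h : ∀ k, IsWeightedDesign μ t k) (k : ℕ) :
    IsWeightedDesign (upperSum μ) t k := by
  rcases lt_or_ge k t with hk | hk
  · exact ⟨0, fun T hT => coverWeight_eq_zero_of_lt_card (hT ▸ hk)⟩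
  obtain ⟨m, rfl⟩ := Nat.exists_eq_add_of_le hk
  choose lam hlam using h
  refine ⟨∑ j ∈ range (Fintype.card ι + 1), lam (t + j) * (j.choose m : R), ?_⟩
  rintro T rfl
  rw [coverWeight_upperSum (J := range (Fintype.card ι + 1))]
  · simp only [hlam _ T rfl]
  · intro j hj
    rw [mem_range] at hj
    exact coverWeight_eq_zero_of_card_lt (by omega) T

end Semiring

theorem IsWeightedDesign.of_upperSum [CommRing R] [IsDomain R] [CharZero R] {μ : Finset ι → R}
    {t : ℕ} {J : Finset ℕ}
    (hJ : ∀ T : Finset ι, #T = t → ∀ j ∉ J, coverWeight μ (t + j) T = 0)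
    (h : ∀ m < #J, IsWeightedDesign (upperSum μ) t (t + m)) (k : ℕ) :
    IsWeightedDesign μ t k := by
  rcases lt_or_ge k t with hk | hk
  · exact ⟨0, fun T hT => coverWeight_eq_zero_of_lt_card (hT ▸ hk)⟩
  obtain ⟨j, rfl⟩ := Nat.exists_eq_add_of_le hk
  refine isWeightedDesign_iff_forall_coverWeight_eq.mpr fun T T' hT hT' => ?_
  by_cases hj : j ∈ J
  swap
  · rw [hJ T hT j hj, hJ T' hT' j hj]
  refine sub_eq_zero.mp (eq_zero_of_sum_mul_choose_eq_zero
    (f := fun j => coverWeight μ (t + j) T - coverWeight μ (t + j) T') (fun m hm => ?_) j hj)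
  have hconst := isWeightedDesign_iff_forall_coverWeight_eq.mp (h m hm) T T' hT hT'
  have hmoment (Q : Finset ι) (hQ : #Q = t) :
      coverWeight (upperSum μ) (t + m) Q =
        ∑ j ∈ J, coverWeight μ (t + j) Q * (j.choose m : R) := by
    subst hQ
    exact coverWeight_upperSum (hJ Q rfl) m
  simp only [sub_mul, sum_sub_distrib]
  rw [← hmoment T hT, ← hmoment T' hT', hconst, sub_self]

section Ring

variable [Ring R] {μ : Finset ι → R} {t k : ℕ}

theorem coverWeight_compl (hk : k ≤ Fintype.card ι) (T : Finset ι) :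
    coverWeight (fun A => μ Aᶜ) k T =
      ∑ P ∈ T.powerset, (-1) ^ #P * coverWeight μ (Fintype.card ι - k) P := by
  calc ∑ A with #A = k ∧ T ⊆ A, μ Aᶜ
      = ∑ B with #B = Fintype.card ι - k, if T ∩ B = ∅ then μ B else 0 := by
        rw [← sum_filter, filter_filter]
        refine sum_nbij' compl compl ?_ ?_ ?_ ?_ ?_ <;>
          simp only [mem_filter, mem_univ, true_and, compl_compl, card_compl, implies_true,
            ← disjoint_iff_inter_eq_empty, and_imp]
        · exact fun A hA hTA => ⟨by omega, disjoint_compl_right_iff.mpr hTA⟩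
        · exact fun B hB hTB => ⟨by omega, subset_compl_iff_disjoint_right.mpr hTB⟩
    _ = ∑ B with #B = Fintype.card ι - k, ∑ P ∈ T.powerset with P ⊆ B, (-1) ^ #P * μ B := by
        refine sum_congr rfl fun B _ => ?_
        have hpow : {P ∈ T.powerset | P ⊆ B} = (T ∩ B).powerset := by
          ext P
          rw [mem_filter, mem_powerset, mem_powerset, subset_inter_iff]
        have := congrArg (Int.cast : ℤ → R) (sum_powerset_neg_one_pow_card (x := T ∩ B))
        push_cast at this
        rw [hpow, ← sum_mul, this, ite_mul, one_mul, zero_mul]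
    _ = ∑ P ∈ T.powerset, ∑ B with #B = Fintype.card ι - k ∧ P ⊆ B, (-1) ^ #P * μ B :=
        sum_comm' fun B P => by simp only [mem_filter, mem_univ, true_and]; tauto
    _ = ∑ P ∈ T.powerset, (-1) ^ #P * coverWeight μ (Fintype.card ι - k) P := by
        simp only [coverWeight, mul_sum]

theorem IsWeightedDesign.compl (h : ∀ s ≤ t, IsWeightedDesign μ s (Fintype.card ι - k)) :
    IsWeightedDesign (fun A => μ Aᶜ) t k := by
  rcases lt_or_ge (Fintype.card ι) k with hk | hk
  · exact ⟨0, fun T _ => coverWeight_eq_zero_of_card_lt hk T⟩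
  choose! lam hlam using h
  refine ⟨∑ s ∈ range (t + 1), t.choose s • ((-1) ^ s * lam s), ?_⟩
  rintro T rfl
  rw [coverWeight_compl hk, ← sum_powerset_apply_card fun s => (-1) ^ s * lam s]
  refine sum_congr rfl fun P hP => ?_
  rw [hlam #P (card_le_card (mem_powerset.mp hP)) P rfl]

end Ring

end WeightedDesigns

section Duality

variable {ι F : Type*} [Field F]

/-- The words that vanish at every coordinate in `S`. -/
def vanishingOn (F : Type*) [Field F] (S : Finset ι) : Submodule F (ι → F) :=
  ⨅ j ∈ S, LinearMap.ker (LinearMap.proj j)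

theorem mem_vanishingOn {S : Finset ι} {y : ι → F} : y ∈ vanishingOn F S ↔ ∀ j ∈ S, y j = 0 := by
  simp only [vanishingOn, Submodule.mem_iInf, LinearMap.mem_ker, LinearMap.proj_apply]

variable [Fintype ι]

theorem finrank_vanishingOn (S : Finset ι) :
    Module.finrank F (vanishingOn F S) = Fintype.card ι - #S := by
  classical
  have e := LinearMap.iInfKerProjEquiv F (fun _ : ι => F) (I := (Sᶜ : Finset ι)) (J := (S : Set ι))
    (by rw [disjoint_coe]; exact disjoint_compl_left) (by simp)
  rw [← card_compl, ← Fintype.card_coe, ← Module.finrank_fintype_fun_eq_card F]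
  exact e.finrank_eq

/-- The dual of a linear code whose coordinates are indexed by an arbitrary finite type, as the
orthogonal complement for the dot product. -/
def orthogonalCode (C : Submodule F (ι → F)) : Submodule F (ι → F) :=
  LinearMap.BilinForm.orthogonal (dotProductBilin F F) C

theorem mem_orthogonalCode {C : Submodule F (ι → F)} {y : ι → F} :
    y ∈ orthogonalCode C ↔ ∀ c ∈ C, c ⬝ᵥ y = 0 :=
  Iff.rfl

theorem dualCode_eq_orthogonalCode {n : ℕ} (C : Submodule F (Fin n → F)) :
    dualCode (C : Set (Fin n → F)) = orthogonalCode C := by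
  ext y
  change (∀ c ∈ C, y ⬝ᵥ c = 0) ↔ _
  simp only [mem_orthogonalCode, dotProduct_comm y]

theorem finrank_orthogonalCode_add_finrank (C : Submodule F (ι → F)) :
    Module.finrank F (orthogonalCode C) + Module.finrank F C = Fintype.card ι := by
  have hB : (dotProductBilin F F : LinearMap.BilinForm F (ι → F)).Nondegenerate :=
    ⟨fun x hx => dotProduct_eq_zero x hx,
      fun y hy => dotProduct_eq_zero y fun x => (dotProduct_comm y x).trans (hy x)⟩
  rw [orthogonalCode, LinearMap.BilinForm.finrank_orthogonal hB,
    Nat.sub_add_cancel (Submodule.finrank_le C), Module.finrank_fintype_fun_eq_card]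

variable [DecidableEq ι]

theorem orthogonalCode_sup_vanishingOn_compl (C : Submodule F (ι → F)) (S : Finset ι) :
    orthogonalCode (C ⊔ vanishingOn F Sᶜ) = orthogonalCode C ⊓ vanishingOn F S := by
  ext y
  rw [Submodule.mem_inf, mem_vanishingOn, mem_orthogonalCode, mem_orthogonalCode]
  constructor
  · refine fun h => ⟨fun c hc => h c (Submodule.mem_sup_left hc), fun j hj => ?_⟩
    rw [← single_one_dotProduct j y]
    refine h _ (Submodule.mem_sup_right (mem_vanishingOn.mpr fun i hi => ?_))
    exact Pi.single_eq_of_ne (fun hij => mem_compl.mp hi (by rwa [hij])) 1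
  · rintro ⟨hC, hS⟩ _ hc
    obtain ⟨a, ha, e, he, rfl⟩ := Submodule.mem_sup.mp hc
    rw [add_dotProduct, hC a ha, zero_add]
    refine sum_eq_zero fun i _ => ?_
    by_cases hi : i ∈ S
    · rw [hS i hi, mul_zero]
    · rw [mem_vanishingOn.mp he i (mem_compl.mpr hi), zero_mul]

theorem finrank_orthogonalCode_inf_vanishingOn (C : Submodule F (ι → F)) (S : Finset ι) :
    Module.finrank F (orthogonalCode C ⊓ vanishingOn F S : Submodule F (ι → F)) +
        (Module.finrank F C + #S) =
      Fintype.card ι + Module.finrank F (C ⊓ vanishingOn F Sᶜ : Submodule F (ι → F)) := by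
  have hdual := finrank_orthogonalCode_add_finrank (C ⊔ vanishingOn F Sᶜ)
  have hsup := Submodule.finrank_sup_add_finrank_inf_eq C (vanishingOn F Sᶜ)
  have hS := card_le_univ S
  rw [orthogonalCode_sup_vanishingOn_compl] at hdual
  rw [finrank_vanishingOn, card_compl] at hsup
  omega

theorem inf_vanishingOn_compl_eq_bot [DecidableEq F] {C : Submodule F (ι → F)} {d : ℕ}
    (hd : ∀ c ∈ C, c ≠ 0 → d ≤ hammingNorm c) {S : Finset ι} (hS : #S < d) :
    C ⊓ vanishingOn F Sᶜ = ⊥ := by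
  refine (Submodule.eq_bot_iff _).mpr fun c hc => ?_
  obtain ⟨hcC, hcS⟩ := Submodule.mem_inf.mp hc
  by_contra hne
  refine (hd c hcC hne).not_gt (lt_of_le_of_lt (card_le_card fun j hj => ?_) hS)
  by_contra hjS
  exact (mem_filter.mp hj).2 (mem_vanishingOn.mp hcS j (mem_compl.mpr hjS))

end Duality

section ZeroSets

variable {ι F : Type*} [Fintype ι] [Field F] [DecidableEq F] {C : Submodule F (ι → F)}

/-- The set of zeros of a word, that is, the complement of its support. -/
def zeroSet (c : ι → F) : Finset ι :=
  {j | c j = 0}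

theorem mem_zeroSet {c : ι → F} {j : ι} : j ∈ zeroSet c ↔ c j = 0 := by
  rw [zeroSet, mem_filter_univ]

theorem coe_compl_zeroSet [DecidableEq ι] (c : ι → F) :
    (((zeroSet c)ᶜ : Finset ι) : Set ι) = {j | c j ≠ 0} := by
  ext j
  rw [mem_coe, mem_compl, mem_zeroSet, Set.mem_ofPred_eq]

theorem card_compl_zeroSet [DecidableEq ι] (c : ι → F) : #(zeroSet c)ᶜ = hammingNorm c := by
  rw [zeroSet, compl_filter, hammingNorm]

theorem mem_vanishingOn_iff_subset_zeroSet {c : ι → F} {S : Finset ι} :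
    c ∈ vanishingOn F S ↔ S ⊆ zeroSet c := by
  simp only [mem_vanishingOn, subset_iff, mem_zeroSet]

open Classical in
/-- The weights not exceeding `n` of the words of `C`. -/
noncomputable def weightsUpTo (C : Submodule F (ι → F)) (n : ℕ) : Finset ℕ :=
  {i ∈ range (n + 1) | ∃ c ∈ C, hammingNorm c = i}

theorem mem_weightsUpTo {n i : ℕ} :
    i ∈ weightsUpTo C n ↔ i ≤ n ∧ ∃ c ∈ C, hammingNorm c = i := by
  classical rw [weightsUpTo, mem_filter, mem_range, Nat.lt_succ_iff]

theorem card_weightsUpTo_le (C : Submodule F (ι → F)) (m n : ℕ) :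
    #(weightsUpTo C n) ≤ #(weightsUpTo C m) + (n - m) := by
  have hsub : weightsUpTo C n ⊆ weightsUpTo C m ∪ Ioc m n := by
    intro i
    simp only [mem_weightsUpTo, mem_union, mem_Ioc]
    rintro ⟨hi, hc⟩
    rcases le_or_gt i m with him | him
    · exact Or.inl ⟨him, hc⟩
    · exact Or.inr ⟨him, hi⟩
  simpa using (card_le_card hsub).trans (card_union_le _ _)

variable [DecidableEq ι] [Fintype F] {d t : ℕ}

open Classical in
/-- The number of words of `C` whose set of zeros is exactly `A`. It is rational so that it can
serve as the weight of `A` in a weighted design. -/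
noncomputable def zeroCount (C : Submodule F (ι → F)) (A : Finset ι) : ℚ :=
  #{c : ι → F | c ∈ C ∧ zeroSet c = A}

theorem zeroCount_eq_zero {A : Finset ι} (h : ∀ c ∈ C, hammingNorm c ≠ #Aᶜ) :
    zeroCount C A = 0 := by
  classical
  rw [zeroCount, Nat.cast_eq_zero, card_eq_zero, filter_eq_empty_iff]
  rintro c - ⟨hc, rfl⟩
  exact h c hc (card_compl_zeroSet c).symm

theorem upperSum_zeroCount (C : Submodule F (ι → F)) (S : Finset ι) :
    upperSum (zeroCount C) S =
      (Fintype.card F : ℚ) ^ Module.finrank F (C ⊓ vanishingOn F S : Submodule F (ι → F)) := by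
  classical
  have hcard : #{c : ι → F | c ∈ C ⊓ vanishingOn F S} =
      Fintype.card F ^ Module.finrank F (C ⊓ vanishingOn F S : Submodule F (ι → F)) := by
    rw [← Fintype.card_subtype, ← Nat.card_eq_fintype_card, ← Nat.card_eq_fintype_card,
      ← Module.natCard_eq_pow_finrank]
  rw [← Nat.cast_pow, ← hcard, card_eq_sum_card_fiberwise
    (f := zeroSet) (t := {A | S ⊆ A}), Nat.cast_sum]
  · refine sum_congr rfl fun A hA => ?_
    have hA : S ⊆ A := (mem_filter.mp hA).2
    simp only [zeroCount, filter_filter, Submodule.mem_inf, mem_vanishingOn_iff_subset_zeroSet]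
    congr 2
    ext c
    simp only [mem_filter, mem_univ, true_and]
    exact ⟨fun h => ⟨⟨h.1, h.2 ▸ hA⟩, h.2⟩, fun h => ⟨h.1.1, h.2⟩⟩
  · intro c hc
    rw [mem_coe, mem_filter, Submodule.mem_inf, mem_vanishingOn_iff_subset_zeroSet] at hc
    exact mem_filter.mpr ⟨mem_univ _, hc.2.2⟩

-- The MacWilliams identity, localised at `S`.
theorem upperSum_zeroCount_orthogonalCode_mul (C : Submodule F (ι → F)) (S : Finset ι) :
    upperSum (zeroCount (orthogonalCode C)) S *
        (Fintype.card F : ℚ) ^ (Module.finrank F C + #S) =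
      (Fintype.card F : ℚ) ^ Fintype.card ι * upperSum (zeroCount C) Sᶜ := by
  rw [upperSum_zeroCount, upperSum_zeroCount, ← pow_add, ← pow_add,
    finrank_orthogonalCode_inf_vanishingOn]

theorem upperSum_zeroCount_orthogonalCode_of_card_lt
    (hd : ∀ c ∈ C, c ≠ 0 → d ≤ hammingNorm c) {S : Finset ι} (hS : #S < d) :
    upperSum (zeroCount (orthogonalCode C)) S =
      (Fintype.card F : ℚ) ^ Fintype.card ι / Fintype.card F ^ (Module.finrank F C + #S) := by
  have hone : upperSum (zeroCount C) Sᶜ = 1 := by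
    rw [upperSum_zeroCount, inf_vanishingOn_compl_eq_bot hd hS, finrank_bot, pow_zero]
  rw [eq_div_iff (pow_ne_zero _ (Nat.cast_ne_zero.mpr Fintype.card_ne_zero)),
    upperSum_zeroCount_orthogonalCode_mul, hone, mul_one]

theorem isWeightedDesign_zeroCount_orthogonalCode
    (hd : ∀ c ∈ C, c ≠ 0 → d ≤ hammingNorm c)
    (hs : #(weightsUpTo (orthogonalCode C) (Fintype.card ι - t)) ≤ d - t) (k : ℕ) :
    IsWeightedDesign (zeroCount (orthogonalCode C)) t k := by
  set W := weightsUpTo (orthogonalCode C) (Fintype.card ι - t)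
  refine IsWeightedDesign.of_upperSum (J := W.image (Fintype.card ι - t - ·)) ?_ ?_ k
  · refine fun _ _ j hj => sum_eq_zero fun A hA => zeroCount_eq_zero fun y hy hyA => hj ?_
    have hAj : #A = t + j := (mem_filter.mp hA).2.1
    have hAc := card_add_card_compl A
    exact mem_image.mpr ⟨hammingNorm y, mem_weightsUpTo.mpr ⟨by omega, y, hy, rfl⟩, by omega⟩
  · intro m hm
    have hm : m < d - t := hm.trans_le (card_image_le.trans hs)
    exact (isWeightedDesign_one t m).of_eq_mul _ fun S hS => by
      rw [upperSum_zeroCount_orthogonalCode_of_card_lt hd (by omega), hS, Pi.one_apply, mul_one]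

theorem isWeightedDesign_zeroCount_of_orthogonalCode
    (h : ∀ s ≤ t, ∀ k, IsWeightedDesign (zeroCount (orthogonalCode C)) s k) (k : ℕ) :
    IsWeightedDesign (zeroCount C) t k := by
  refine IsWeightedDesign.of_upperSum (J := range (Fintype.card ι + 1)) ?_ (fun m _ => ?_) k
  · intro T _ j hj
    rw [mem_range] at hj
    exact coverWeight_eq_zero_of_card_lt (by omega) T
  have hcompl : IsWeightedDesign (fun A => upperSum (zeroCount (orthogonalCode C)) Aᶜ) t (t + m) :=
    IsWeightedDesign.compl fun s hs => IsWeightedDesign.upperSum (h s hs) _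
  refine hcompl.of_eq_mul ((Fintype.card F : ℚ) ^ (Module.finrank F C +
    (Fintype.card ι - (t + m))) / Fintype.card F ^ Fintype.card ι) fun A hA => ?_
  have hmac := upperSum_zeroCount_orthogonalCode_mul C Aᶜ
  rw [compl_compl, card_compl, hA] at hmac
  have hq : (Fintype.card F : ℚ) ^ Fintype.card ι ≠ 0 :=
    pow_ne_zero _ (Nat.cast_ne_zero.mpr Fintype.card_ne_zero)
  rw [div_mul_eq_mul_div, eq_div_iff hq, mul_comm, ← hmac, mul_comm]

end ZeroSets

section Supports

variable {ι F : Type*} [Fintype ι] [Field F] [Fintype F] [DecidableEq F]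

-- The pigeonhole principle, applied to the ratios `c' j / c j`.
theorem exists_ne_zero_hammingNorm_smul_sub_le {c c' : ι → F} (hc : c ≠ 0)
    (h : zeroSet c = zeroSet c') :
    ∃ a : F, a ≠ 0 ∧ hammingNorm (a • c - c') ≤
      hammingNorm c - (hammingNorm c + Fintype.card F - 2) / (Fintype.card F - 1) := by
  classical
  have hq : 1 < Fintype.card F := Fintype.one_lt_card
  have hpos : 0 < hammingNorm c := hammingNorm_pos_iff.mpr hc
  have hzero (j : ι) : c j = 0 ↔ c' j = 0 := by rw [← mem_zeroSet, h, mem_zeroSet]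
  have hmul := Nat.mul_div_le (hammingNorm c - 1) (Fintype.card F - 1)
  obtain ⟨a, ha, hfib⟩ := exists_lt_card_fiber_of_mul_lt_card_of_maps_to
    (s := (zeroSet c)ᶜ) (t := univ.erase (0 : F)) (f := fun j => c' j / c j)
    (n := (hammingNorm c - 1) / (Fintype.card F - 1))
    (fun j hj => by
      rw [mem_compl, mem_zeroSet] at hj
      exact mem_erase.mpr ⟨div_ne_zero (mt (hzero j).mpr hj) hj, mem_univ _⟩)
    (by rw [card_erase_of_mem (mem_univ _), card_univ, card_compl_zeroSet]; omega)
  have hceil : (hammingNorm c + Fintype.card F - 2) / (Fintype.card F - 1) =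
      (hammingNorm c - 1) / (Fintype.card F - 1) + 1 := by
    rw [← Nat.add_div_right _ (by omega)]
    congr 1
    omega
  have hsub : (zeroSet (a • c - c'))ᶜ ⊆ (zeroSet c)ᶜ \ {j ∈ (zeroSet c)ᶜ | c' j / c j = a} := by
    intro j
    simp only [mem_filter, mem_sdiff, mem_compl, mem_zeroSet, Pi.sub_apply, Pi.smul_apply,
      smul_eq_mul]
    intro hj
    have hcj : c j ≠ 0 := fun h0 => hj (by rw [h0, (hzero j).mp h0, mul_zero, sub_zero])
    refine ⟨hcj, fun hja => hj ?_⟩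
    rw [← hja.2, div_mul_cancel₀ _ hcj, sub_self]
  have hle := card_le_card hsub
  rw [card_sdiff_of_subset (filter_subset _ _), card_compl_zeroSet, card_compl_zeroSet] at hle
  exact ⟨a, ne_of_mem_erase ha, by omega⟩

variable {C : Submodule F (ι → F)} {d i t : ℕ}

theorem exists_ne_zero_smul_eq_of_zeroSet_eq
    (hd : ∀ c ∈ C, c ≠ 0 → d ≤ hammingNorm c) {c c' : ι → F} (hc : c ∈ C) (hc' : c' ∈ C)
    (hne : c ≠ 0) (h : zeroSet c = zeroSet c')
    (hlt : hammingNorm c - (hammingNorm c + Fintype.card F - 2) / (Fintype.card F - 1) < d) :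
    ∃ a : F, a ≠ 0 ∧ a • c = c' := by
  obtain ⟨a, ha, hle⟩ := exists_ne_zero_hammingNorm_smul_sub_le hne h
  refine ⟨a, ha, sub_eq_zero.mp (by_contra fun hsub => ?_)⟩
  exact (hd _ (C.sub_mem (C.smul_mem a hc) hc') hsub).not_gt (hle.trans_lt hlt)

variable [DecidableEq ι]

theorem zeroCount_zeroSet (hd : ∀ c ∈ C, c ≠ 0 → d ≤ hammingNorm c) {c : ι → F}
    (hc : c ∈ C) (hne : c ≠ 0)
    (hlt : hammingNorm c - (hammingNorm c + Fintype.card F - 2) / (Fintype.card F - 1) < d) :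
    zeroCount C (zeroSet c) = (Fintype.card F : ℚ) - 1 := by
  classical
  have himage : ({c' | c' ∈ C ∧ zeroSet c' = zeroSet c} : Finset (ι → F)) =
      (univ.erase (0 : F)).image (· • c) := by
    ext c'
    simp only [mem_filter, mem_univ, true_and, mem_image, mem_erase, and_true]
    constructor
    · rintro ⟨hc', hz⟩
      exact exists_ne_zero_smul_eq_of_zeroSet_eq hd hc hc' hne hz.symm hlt
    · rintro ⟨a, ha, rfl⟩
      refine ⟨C.smul_mem a hc, ?_⟩
      simp only [zeroSet, Pi.smul_apply, smul_eq_zero_iff_right ha]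
  rw [zeroCount, himage, card_image_of_injective _ (smul_left_injective F hne),
    card_erase_of_mem (mem_univ _), card_univ, Nat.cast_sub Fintype.card_pos, Nat.cast_one]

/-- The supports of the words of weight `i` in `C` that contain `T`. -/
def supportsContaining (C : Submodule F (ι → F)) (i : ℕ) (T : Finset ι) : Set (Set ι) :=
  {S | (∃ c ∈ C, hammingNorm c = i ∧ S = {j | c j ≠ 0}) ∧ ↑T ⊆ S}

open Classical in
theorem ncard_supportsContaining (C : Submodule F (ι → F)) (i : ℕ) (T : Finset ι) :
    (supportsContaining C i T).ncard = #{A | (#A = i ∧ T ⊆ A) ∧ ∃ c ∈ C, zeroSet c = Aᶜ} := by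
  rw [← Set.ncard_coe_finset, ← Set.ncard_image_of_injective _ (coe_injective (α := ι))]
  congr 1
  ext S
  simp only [supportsContaining, Set.mem_ofPred_eq, Set.mem_image, mem_coe, mem_filter_univ]
  constructor
  · rintro ⟨⟨c, hc, rfl, rfl⟩, hT⟩
    rw [← coe_compl_zeroSet, coe_subset] at hT
    exact ⟨(zeroSet c)ᶜ, ⟨⟨card_compl_zeroSet c, hT⟩, c, hc, (compl_compl _).symm⟩,
      coe_compl_zeroSet c⟩
  · rintro ⟨A, ⟨⟨rfl, hT⟩, c, hc, hcA⟩, rfl⟩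
    obtain rfl : (zeroSet c)ᶜ = A := by rw [hcA, compl_compl]
    exact ⟨⟨c, hc, (card_compl_zeroSet c).symm, coe_compl_zeroSet c⟩, coe_subset.mpr hT⟩

theorem coverWeight_zeroCount_compl (hd : ∀ c ∈ C, c ≠ 0 → d ≤ hammingNorm c) (hi : 0 < i)
    (hlt : i - (i + Fintype.card F - 2) / (Fintype.card F - 1) < d) (T : Finset ι) :
    coverWeight (fun A => zeroCount C Aᶜ) i T =
      (supportsContaining C i T).ncard * ((Fintype.card F : ℚ) - 1) := by
  classical
  rw [ncard_supportsContaining, ← nsmul_eq_mul, ← sum_const, ← filter_filter, sum_filter]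
  refine sum_congr rfl fun A hA => ?_
  obtain rfl : #A = i := (mem_filter.mp hA).2.1
  change zeroCount C Aᶜ = _
  split_ifs with h
  · obtain ⟨c, hc, hcA⟩ := h
    have hw : hammingNorm c = #A := by rw [← card_compl_zeroSet, hcA, compl_compl]
    rw [← hw] at hi hlt
    rw [← hcA, zeroCount_zeroSet hd hc (hammingNorm_pos_iff.mp hi) hlt]
  · rw [zeroCount, Nat.cast_eq_zero, card_eq_zero, filter_eq_empty_iff]
    exact fun c _ hc => h ⟨c, hc⟩

/-- The supports of the words of weight `i` in `C` form a `t`-design; a support shared by several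
words counts once. -/
def SupportsFormDesign (C : Submodule F (ι → F)) (i t : ℕ) : Prop :=
  ∃ lam, ∀ T : Finset ι, #T = t → (supportsContaining C i T).ncard = lam

theorem IsWeightedDesign.supportsFormDesign (h : IsWeightedDesign (fun A => zeroCount C Aᶜ) t i)
    (hd : ∀ c ∈ C, c ≠ 0 → d ≤ hammingNorm c) (hi : 0 < i)
    (hlt : i - (i + Fintype.card F - 2) / (Fintype.card F - 1) < d) :
    SupportsFormDesign C i t := by
  obtain ⟨lam, hlam⟩ := h
  have hq : (Fintype.card F : ℚ) - 1 ≠ 0 :=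
    sub_ne_zero.mpr (Nat.cast_ne_one.mpr Fintype.one_lt_card.ne')
  refine ⟨⌊lam / ((Fintype.card F : ℚ) - 1)⌋₊, fun T hT => ?_⟩
  rw [← hlam T hT, coverWeight_zeroCount_compl hd hi hlt, mul_div_cancel_right₀ _ hq,
    Nat.floor_natCast]

end Supports

section AssmusMattson

theorem monotone_sub_add_sub_two_div_sub_one {q : ℕ} (hq : 1 < q) :
    Monotone fun x : ℕ => x - (x + q - 2) / (q - 1) := by
  refine monotone_nat_of_le_succ fun x => ?_
  have h : (x + 1 + q - 2) / (q - 1) ≤ (x + q - 2) / (q - 1) + 1 := by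
    rw [← Nat.add_div_right _ (by omega)]
    exact Nat.div_le_div_right (by omega)
  omega

variable {ι F : Type*} [Fintype ι] [Field F] [DecidableEq F]

theorem ncard_hammingNorm_eq_ne_zero_iff [Finite F] {C : Submodule F (ι → F)} {i : ℕ} :
    {c : ι → F | c ∈ C ∧ hammingNorm c = i}.ncard ≠ 0 ↔ ∃ c ∈ C, hammingNorm c = i := by
  rw [← Nat.pos_iff_ne_zero, Set.ncard_pos]
  rfl

theorem le_hammingNorm_of_isLeast [Finite F] {C : Submodule F (ι → F)} {d : ℕ}
    (hd : IsLeast {i | 0 < i ∧ {c : ι → F | c ∈ C ∧ hammingNorm c = i}.ncard ≠ 0} d) :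
    ∀ c ∈ C, c ≠ 0 → d ≤ hammingNorm c := fun c hc hne =>
  hd.2 ⟨hammingNorm_pos_iff.mpr hne, ncard_hammingNorm_eq_ne_zero_iff.mpr ⟨c, hc, rfl⟩⟩

theorem assmus_mattson_general [Fintype F] {C : Submodule F (ι → F)} {d d' t : ℕ}
    (hd : ∀ c ∈ C, c ≠ 0 → d ≤ hammingNorm c)
    (hd' : ∀ y ∈ orthogonalCode C, y ≠ 0 → d' ≤ hammingNorm y)
    (hs : #(weightsUpTo (orthogonalCode C) (Fintype.card ι - t)) ≤ d - t) :
    (∀ i, 0 < i → i - (i + Fintype.card F - 2) / (Fintype.card F - 1) < d →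
      SupportsFormDesign C i t) ∧
    (∀ i, 0 < i → i - (i + Fintype.card F - 2) / (Fintype.card F - 1) < d' →
      SupportsFormDesign (orthogonalCode C) i t) := by
  classical
  have htd : t < d := by
    have : 0 < #(weightsUpTo (orthogonalCode C) (Fintype.card ι - t)) := card_pos.mpr
      ⟨0, mem_weightsUpTo.mpr ⟨Nat.zero_le _, 0, zero_mem _, hammingNorm_zero⟩⟩
    omega
  have hdual : ∀ r ≤ t, ∀ k, IsWeightedDesign (zeroCount (orthogonalCode C)) r k := by
    intro r hr
    have := card_weightsUpTo_le (orthogonalCode C) (Fintype.card ι - t) (Fintype.card ι - r)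
    exact isWeightedDesign_zeroCount_orthogonalCode hd (by omega)
  have hprimal : ∀ r ≤ t, ∀ k, IsWeightedDesign (zeroCount C) r k := fun r hr =>
    isWeightedDesign_zeroCount_of_orthogonalCode fun s hs => hdual s (hs.trans hr)
  exact ⟨fun i hi => (IsWeightedDesign.compl fun r hr => hprimal r hr _).supportsFormDesign hd hi,
    fun i hi => (IsWeightedDesign.compl fun r hr => hdual r hr _).supportsFormDesign hd' hi⟩

end AssmusMattson

/-- **Assmus–Mattson theorem.** Let `C` be a linear code of length `v`
over `F_q` with minimum nonzero weight `d`, dual minimum nonzero weight `d^⊥`, and let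
`w` (resp. `w^⊥`) be the largest integer `≤ v` with `w − ⌊(w+q−2)/(q−1)⌋ < d` (resp.
`< d^⊥`). Fix `0 < t < d` and let `s` be the number of `i` with `0 ≤ i ≤ v − t` and
`A_i^⊥ ≠ 0`. If `s ≤ d − t`, then the supports of the weight-`i` codewords of `C` form a
`t`-design for `A_i ≠ 0`, `d ≤ i ≤ w`, and the supports of the weight-`i` codewords of
`C^⊥` form a `t`-design for `A_i^⊥ ≠ 0`, `d^⊥ ≤ i ≤ min(v − t, w^⊥)`. -/
theorem assmus_mattson
    (q v d dperp w wperp t s : ℕ)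
    (hq : ∃ p r : ℕ, p.Prime ∧ 0 < r ∧ q = p ^ r)
    (F : Type) [Field F] [Fintype F] [DecidableEq F] (hF : Fintype.card F = q)
    (C : Submodule F (Fin v → F))
    (A Adual : ℕ → ℕ)
    (hA : ∀ i, A i = {c : Fin v → F | c ∈ C ∧ hammingNorm c = i}.ncard)
    (hAdual : ∀ i, Adual i =
      {y : Fin v → F | y ∈ dualCode (C : Set (Fin v → F)) ∧ hammingNorm y = i}.ncard)
    (hd : IsLeast {i | 0 < i ∧ A i ≠ 0} d)
    (hdperp : IsLeast {i | 0 < i ∧ Adual i ≠ 0} dperp)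
    (hw : IsGreatest {x | x ≤ v ∧ x - (x + q - 2) / (q - 1) < d} w)
    (hwperp : IsGreatest {x | x ≤ v ∧ x - (x + q - 2) / (q - 1) < dperp} wperp)
    (ht : 0 < t) (htd : t < d)
    (hs : s = ((Finset.range (v - t + 1)).filter (fun i => Adual i ≠ 0)).card)
    (hsd : s ≤ d - t) :
    (∀ i, A i ≠ 0 → d ≤ i → i ≤ w →
      ∃ lam, ∀ T : Finset (Fin v), T.card = t →
        {S : Set (Fin v) |
          (∃ c ∈ C, hammingNorm c = i ∧ S = {j | c j ≠ 0}) ∧ ↑T ⊆ S}.ncard = lam) ∧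
    (∀ i, Adual i ≠ 0 → dperp ≤ i → i ≤ min (v - t) wperp →
      ∃ lam, ∀ T : Finset (Fin v), T.card = t →
        {S : Set (Fin v) |
          (∃ y ∈ dualCode (C : Set (Fin v → F)), hammingNorm y = i ∧ S = {j | y j ≠ 0}) ∧
          ↑T ⊆ S}.ncard = lam) := by
  subst hF hs
  obtain rfl : A = _ := funext hA
  obtain rfl : Adual = _ := funext hAdual
  rw [dualCode_eq_orthogonalCode C] at hdperp hsd ⊢
  have hweights : #(weightsUpTo (orthogonalCode C) (Fintype.card (Fin v) - t)) ≤ d - t := by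
    convert hsd using 2
    ext i
    rw [mem_weightsUpTo, mem_filter, mem_range, Nat.lt_succ_iff, Fintype.card_fin,
      ncard_hammingNorm_eq_ne_zero_iff]
  obtain ⟨hprimal, hdual⟩ := assmus_mattson_general (le_hammingNorm_of_isLeast hd)
    (le_hammingNorm_of_isLeast hdperp) hweights
  have hmono := monotone_sub_add_sub_two_div_sub_one (Fintype.one_lt_card (α := F))
  exact ⟨fun i _ hdi hiw => hprimal i (hd.1.1.trans_le hdi) ((hmono hiw).trans_lt hw.1.2),
    fun i _ hdi hiw => hdual i (hdperp.1.1.trans_le hdi)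
      ((hmono (hiw.trans (min_le_right _ _))).trans_lt hwperp.1.2)⟩
end

section
/- Let C be a binary linear code of length n, dimension κ > 1, and minimum nonzero Hamming weight d, and let t < d be a positive integer. Suppose that for each weight w > 0 the supports of the codewords of Hamming weight w in C form a t-design. Then for each nonzero weight, the supports of the codewords of that weight in the dual code C^⊥ also form a t-design. -/
open Polynomial Finset

/-!
Write `j = #(T ∩ supp c)`. In a family of blocks of equal size at least `t`, a `t`-design is an
`s`-design for every `s ≤ t`, and inclusion–exclusion then shows that the distribution of `j` over
the family is the same for all `t`-sets `T`. A finite Fourier transform (MacWilliams) turns the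
weight enumerator of the words of `C^⊥` whose support contains `T` into a sum over `c ∈ C` of terms
that depend only on the weight of `c` and on `j`. Grouping `C` by weight, the enumerator is
therefore independent of `T`, and its coefficients are the numbers to be compared. Words of weight
below `t` do no harm: by the bound on the minimum distance only the zero word is among them.
-/

section Design

variable {α ι : Type*} [DecidableEq α]

/-- The blocks `B i`, `i ∈ I`, form a `t`-design. Blocks are indexed, so that repeated blocks are
counted with multiplicity, and their sizes are unrestricted. -/
def IsDesign (t : ℕ) (I : Finset ι) (B : ι → Finset α) : Prop :=
  ∃ lam, ∀ T : Finset α, #T = t → #{i ∈ I | T ⊆ B i} = lam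

variable {I : Finset ι} {B : ι → Finset α} {s t k : ℕ}

lemma isDesign_of_forall_card_eq
    (h : ∀ T T' : Finset α, #T = t → #T' = t → #{i ∈ I | T ⊆ B i} = #{i ∈ I | T' ⊆ B i}) :
    IsDesign t I B := by
  by_cases hT : ∃ T₀ : Finset α, #T₀ = t
  · obtain ⟨T₀, hT₀⟩ := hT
    exact ⟨_, fun T hT => h T T₀ hT hT₀⟩
  · exact ⟨0, fun T hT' => (hT ⟨T, hT'⟩).elim⟩

lemma isDesign_of_forall_eq_empty (hB : ∀ i ∈ I, B i = ∅) (s : ℕ) : IsDesign s I B := by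
  refine isDesign_of_forall_card_eq fun T T' hT hT' => congrArg card (filter_congr fun i hi => ?_)
  rw [hB i hi, subset_empty, subset_empty, ← card_eq_zero, ← card_eq_zero, hT, hT']

/-- Double counting of the pairs `(i, T)` with `S ⊆ T ⊆ B i` and `#T = t`. -/
lemma card_filter_subset_mul_choose [Fintype α] {lam : ℕ} (hB : ∀ i ∈ I, #(B i) = k)
    (hlam : ∀ T : Finset α, #T = t → #{i ∈ I | T ⊆ B i} = lam) {S : Finset α} (hS : #S ≤ t) :
    #{i ∈ I | S ⊆ B i} * (k - #S).choose (t - #S) =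
      (Fintype.card α - #S).choose (t - #S) * lam := by
  rw [← card_univ, ← card_filter_powersetCard_subset S univ t (subset_univ S) hS]
  refine card_mul_eq_card_mul (fun i T => T ⊆ B i) (fun i hi => ?_) (fun T hT => ?_)
  · obtain ⟨hi, hSi⟩ := mem_filter.mp hi
    rw [← hB i hi, ← card_filter_powersetCard_subset S (B i) t hSi hS]
    congr 1
    ext T
    simp only [mem_bipartiteAbove, mem_filter, mem_powersetCard, subset_univ, true_and]
    tauto
  · obtain ⟨hT, hST⟩ := mem_filter.mp hT
    rw [← hlam T (mem_powersetCard_univ.mp hT)]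
    congr 1
    ext i
    simp only [mem_bipartiteBelow, mem_filter, and_assoc]
    exact ⟨fun h => ⟨h.1, h.2.2⟩, fun h => ⟨h.1, hST.trans h.2, h.2⟩⟩

lemma IsDesign.of_le [Finite α] (h : IsDesign t I B) (hB : ∀ i ∈ I, #(B i) = k) (htk : t ≤ k)
    (hst : s ≤ t) : IsDesign s I B := by
  have := Fintype.ofFinite α
  obtain ⟨lam, hlam⟩ := h
  refine isDesign_of_forall_card_eq fun S S' hS hS' => ?_
  have hcount := card_filter_subset_mul_choose hB hlam (hS.trans_le hst)
  have hcount' := card_filter_subset_mul_choose hB hlam (hS'.trans_le hst)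
  rw [hS] at hcount
  rw [hS', ← hcount] at hcount'
  exact Nat.eq_of_mul_eq_mul_right (Nat.choose_pos (Nat.sub_le_sub_right htk s)) hcount'.symm

lemma card_filter_subset_disjoint_insert (S U : Finset α) (a : α) :
    #{i ∈ I | S ⊆ B i ∧ Disjoint (insert a U) (B i)} =
      #{i ∈ I | S ⊆ B i ∧ Disjoint U (B i)} - #{i ∈ I | insert a S ⊆ B i ∧ Disjoint U (B i)} := by
  rw [← card_filter_add_card_filter_not (s := {i ∈ I | S ⊆ B i ∧ Disjoint U (B i)})
    (fun i => a ∈ B i), filter_filter, filter_filter]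
  simp only [insert_subset_iff, disjoint_insert_left, and_assoc, and_comm, and_left_comm,
    add_tsub_cancel_left]

/-- The intersection triangle, with its recursion `λ (s, u + 1) = λ (s, u) - λ (s + 1, u)`. -/
lemma exists_card_filter_subset_disjoint_eq (h : ∀ s ≤ t, IsDesign s I B) (s u : ℕ)
    (hsu : s + u ≤ t) :
    ∃ lam, ∀ S U : Finset α, #S = s → #U = u → Disjoint S U →
      #{i ∈ I | S ⊆ B i ∧ Disjoint U (B i)} = lam := by
  induction u generalizing s with
  | zero =>
    obtain ⟨lam, hlam⟩ := h s hsu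
    refine ⟨lam, fun S U hS hU _ => ?_⟩
    simpa only [card_eq_zero.mp hU, disjoint_empty_left, and_true] using hlam S hS
  | succ u ih =>
    obtain ⟨lam, hlam⟩ := ih s (by omega)
    obtain ⟨mu, hmu⟩ := ih (s + 1) (by omega)
    refine ⟨lam - mu, fun S U hS hU hSU => ?_⟩
    obtain ⟨a, V, haV, rfl, hV⟩ := card_eq_succ.mp hU
    obtain ⟨haS, hSV⟩ := disjoint_insert_right.mp hSU
    rw [card_filter_subset_disjoint_insert, hlam S V hS hV hSV,
      hmu (insert a S) V (by rw [card_insert_of_notMem haS, hS]) hV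
        (disjoint_insert_left.mpr ⟨haV, hSV⟩)]

lemma inter_eq_iff_subset_disjoint_sdiff {S T b : Finset α} (hST : S ⊆ T) :
    T ∩ b = S ↔ S ⊆ b ∧ Disjoint (T \ S) b := by
  grind [disjoint_left]

theorem exists_sum_card_inter_eq {M : Type*} [AddCommMonoid M] (h : ∀ s ≤ t, IsDesign s I B)
    (f : ℕ → M) : ∃ m, ∀ T : Finset α, #T = t → ∑ i ∈ I, f #(T ∩ B i) = m := by
  have hcount (s : ℕ) : ∃ lam, ∀ S T : Finset α, S ⊆ T → #S = s → #T = t →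
      #{i ∈ I | T ∩ B i = S} = lam := by
    by_cases hst : s ≤ t
    · obtain ⟨lam, hlam⟩ := exists_card_filter_subset_disjoint_eq h s (t - s) (by omega)
      refine ⟨lam, fun S T hST hS hT => ?_⟩
      simp only [inter_eq_iff_subset_disjoint_sdiff hST]
      exact hlam S (T \ S) hS (by rw [card_sdiff_of_subset hST, hS, hT]) disjoint_sdiff
    · exact ⟨0, fun S T hST hS hT => by have := card_le_card hST; omega⟩
  choose lam hlam using hcount
  refine ⟨∑ s ∈ range (t + 1), t.choose s • lam s • f s, fun T hT => ?_⟩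
  calc ∑ i ∈ I, f #(T ∩ B i)
      = ∑ S ∈ T.powerset, ∑ i ∈ I with T ∩ B i = S, f #(T ∩ B i) :=
        (sum_fiberwise_of_maps_to (fun i _ => mem_powerset.mpr inter_subset_left) _).symm
    _ = ∑ S ∈ T.powerset, lam #S • f #S := by
        refine sum_congr rfl fun S hS => ?_
        rw [← hlam #S S T (mem_powerset.mp hS) rfl hT]
        exact sum_eq_card_nsmul fun i hi => by rw [(mem_filter.mp hi).2]
    _ = ∑ s ∈ range (t + 1), t.choose s • lam s • f s := by
        rw [sum_powerset_apply_card (fun s => lam s • f s), hT]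

end Design

section Words

variable {ι R : Type*} [Fintype ι] [Zero R] [DecidableEq R]

/-- The support of a word as a `Finset`; its cardinality is `hammingNorm c` by definition. -/
def wordSupport (c : ι → R) : Finset ι := {i | c i ≠ 0}

@[simp]
lemma mem_wordSupport {c : ι → R} {i : ι} : i ∈ wordSupport c ↔ c i ≠ 0 := by
  simp [wordSupport]

lemma card_wordSupport (c : ι → R) : #(wordSupport c) = hammingNorm c := rfl

lemma subset_wordSupport_iff {c : ι → R} {T : Finset ι} :
    T ⊆ wordSupport c ↔ ∀ i ∈ T, c i ≠ 0 := by
  simp only [subset_iff, mem_wordSupport]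

/-- The words of weight `w` in `D` form a `t`-design, each support being counted once for every
word that has it (over `ZMod 2` there is only one). -/
def HoldsDesign (D : Set (ι → R)) (t w : ℕ) : Prop :=
  ∃ lam, ∀ T : Finset ι, #T = t →
    {c | c ∈ D ∧ hammingNorm c = w ∧ ∀ i ∈ T, c i ≠ 0}.ncard = lam

variable [DecidableEq ι]

lemma prod_ite_eq_ite_subset_wordSupport {A : Type*} [CommSemiring A] (x : A) (T : Finset ι)
    (y : ι → R) :
    ∏ i, (if y i = 0 then if i ∈ T then 0 else 1 else x) =
      if T ⊆ wordSupport y then x ^ hammingNorm y else 0 := by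
  split_ifs with hT
  · have hfactor (i : ι) : (if y i = 0 then if i ∈ T then 0 else 1 else x) =
        if i ∈ wordSupport y then x else 1 := by
      have hiT : i ∈ T → i ∈ wordSupport y := fun hi => hT hi
      grind [mem_wordSupport]
    simp only [hfactor, prod_ite_mem, univ_inter, prod_const, card_wordSupport]
  · obtain ⟨i, hiT, hi⟩ := not_subset.mp hT
    have hyi : y i = 0 := by simpa only [mem_wordSupport, not_not] using hi
    exact prod_eq_zero (mem_univ i) (by rw [if_pos hyi, if_pos hiT])

variable [Fintype R]

open Classical in
/-- The words of weight `w` in `D`. -/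
noncomputable def wordsOfWeight (D : Set (ι → R)) (w : ℕ) : Finset (ι → R) :=
  {c | c ∈ D ∧ hammingNorm c = w}

lemma mem_wordsOfWeight {D : Set (ι → R)} {w : ℕ} {c : ι → R} :
    c ∈ wordsOfWeight D w ↔ c ∈ D ∧ hammingNorm c = w := by
  simp [wordsOfWeight]

lemma holdsDesign_iff_isDesign {D : Set (ι → R)} {t w : ℕ} :
    HoldsDesign D t w ↔ IsDesign t (wordsOfWeight D w) wordSupport := by
  have hcount (T : Finset ι) : {c | c ∈ D ∧ hammingNorm c = w ∧ ∀ i ∈ T, c i ≠ 0}.ncard =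
      #{c ∈ wordsOfWeight D w | T ⊆ wordSupport c} := by
    rw [← Set.ncard_coe_finset]
    congr 1
    ext c
    simp only [Set.mem_ofPred_eq, coe_filter, mem_wordsOfWeight, subset_wordSupport_iff, and_assoc]
  simp only [HoldsDesign, IsDesign, hcount]

lemma isDesign_wordsOfWeight_of_le {D : Set (ι → R)} {t w s : ℕ}
    (hmin : ∀ c ∈ D, c ≠ 0 → t ≤ hammingNorm c) (h : 0 < w → HoldsDesign D t w) (hst : s ≤ t) :
    IsDesign s (wordsOfWeight D w) wordSupport := by
  by_cases hw : 0 < w ∧ t ≤ w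
  · exact (holdsDesign_iff_isDesign.mp (h hw.1)).of_le
      (fun c hc => (mem_wordsOfWeight.mp hc).2) hw.2 hst
  · refine isDesign_of_forall_eq_empty (fun c hc => ?_) s
    obtain ⟨hcD, hcw⟩ := mem_wordsOfWeight.mp hc
    have hc0 : hammingNorm c = 0 := by
      by_contra hne
      have := hmin c hcD (hammingNorm_ne_zero_iff.mp hne)
      omega
    exact card_eq_zero.mp hc0

open Classical in
lemma sum_weight_card_inter_eq {M : Type*} [AddCommMonoid M] {D : Set (ι → R)} {t : ℕ}
    (h : ∀ w, ∀ s ≤ t, IsDesign s (wordsOfWeight D w) wordSupport) (f : ℕ → ℕ → M)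
    {T T' : Finset ι} (hT : #T = t) (hT' : #T' = t) :
    ∑ c with c ∈ D, f (hammingNorm c) #(T ∩ wordSupport c) =
      ∑ c with c ∈ D, f (hammingNorm c) #(T' ∩ wordSupport c) := by
  have hfiber (U : Finset ι) : ∑ c with c ∈ D, f (hammingNorm c) #(U ∩ wordSupport c) =
      ∑ w ∈ image hammingNorm {c | c ∈ D}, ∑ c ∈ wordsOfWeight D w, f w #(U ∩ wordSupport c) := by
    rw [← sum_fiberwise_of_maps_to (fun c hc => mem_image_of_mem hammingNorm hc)]
    refine sum_congr rfl fun w _ => ?_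
    rw [filter_filter]
    exact sum_congr rfl fun c hc => by rw [(mem_wordsOfWeight.mp hc).2]
  rw [hfiber, hfiber]
  refine sum_congr rfl fun w _ => ?_
  obtain ⟨m, hm⟩ := exists_sum_card_inter_eq (h w) (f w)
  rw [hm T hT, hm T' hT']

open Classical in
/-- The Hamming weight enumerator, evaluated at `x`, of the words of `D` whose support
contains `T`. -/
noncomputable def supersetEnumerator {A : Type*} [CommSemiring A] (D : Set (ι → R)) (T : Finset ι)
    (x : A) : A :=
  ∑ y with y ∈ D, if T ⊆ wordSupport y then x ^ hammingNorm y else 0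

lemma coeff_supersetEnumerator_X {A : Type*} [CommSemiring A] (D : Set (ι → R))
    (T : Finset ι) (w : ℕ) :
    (supersetEnumerator D T (X : A[X])).coeff w = #{y ∈ wordsOfWeight D w | T ⊆ wordSupport y} := by
  classical
  rw [supersetEnumerator, ← sum_filter, finsetSum_coeff]
  simp only [coeff_X_pow]
  rw [sum_boole]
  congr 2
  ext y
  simp only [mem_filter, mem_univ, true_and, mem_wordsOfWeight, eq_comm (a := w)]
  tauto

end Words

lemma prod_ite_mem_ite_mem {ι M : Type*} [Fintype ι] [DecidableEq ι] [CommMonoid M]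
    (S T : Finset ι) (a b c d : M) :
    ∏ i, (if i ∈ S then if i ∈ T then a else b else if i ∈ T then c else d) =
      a ^ #(S ∩ T) * b ^ #(S \ T) * (c ^ #(T \ S) * d ^ #(S ∪ T)ᶜ) := by
  simp only [prod_ite, prod_const, filter_mem_eq_inter, filter_notMem_eq_sdiff, univ_inter,
    ← compl_eq_univ_sdiff]
  rw [sdiff_eq_inter_compl T S, inter_comm T Sᶜ, compl_union, sdiff_eq_inter_compl Sᶜ T]

section MacWilliams

variable {R A : Type*} [CommRing R] [CommRing A] {χ : AddChar R A} {n : ℕ}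

lemma addChar_dotProduct {ι : Type*} [Fintype ι] (y c : ι → R) :
    χ (y ⬝ᵥ c) = ∏ i, χ (y i * c i) :=
  map_sum χ.toAddMonoidHom (fun i => y i * c i) univ

variable [Fintype R] [IsDomain A]

open Classical in
lemma sum_addChar_dotProduct (hχ : χ.IsPrimitive) (C : Submodule R (Fin n → R)) (y : Fin n → R) :
    ∑ c with c ∈ C, χ (y ⬝ᵥ c) =
      if y ∈ dualCode (C : Set (Fin n → R)) then (Nat.card C : A) else 0 := by
  let ψ : AddChar C A :=
    χ.compAddMonoidHom ((dotProductBilin R R y).comp C.subtype).toAddMonoidHom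
  have hψ (c : C) : ψ c = χ (y ⬝ᵥ c) := rfl
  have hψ_eq_zero : ψ = 0 ↔ y ∈ dualCode (C : Set (Fin n → R)) := by
    refine ⟨fun h c hc => ?_, fun h => DFunLike.ext _ _ fun c => ?_⟩
    · by_contra hyc
      refine hχ hyc (DFunLike.ext _ _ fun b => ?_)
      have hb := DFunLike.congr_fun h ⟨b • c, C.smul_mem b hc⟩
      rwa [hψ, dotProduct_smul, smul_eq_mul, mul_comm] at hb
    · rw [hψ, dotProduct, h c c.2, AddChar.map_zero_eq_one, AddChar.zero_apply]
  rw [sum_subtype {c | c ∈ C} (fun c => mem_filter_univ c) fun c => χ (y ⬝ᵥ c),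
    ← if_congr hψ_eq_zero rfl rfl, Nat.card_eq_fintype_card]
  exact AddChar.sum_eq_ite ψ

open Classical in
/-- The MacWilliams identity for complete weight enumerators with separate variables `f i v` for
each coordinate `i`: Poisson summation for functions that are products over the coordinates. -/
theorem card_mul_sum_dualCode_prod (hχ : χ.IsPrimitive) (C : Submodule R (Fin n → R))
    (f : Fin n → R → A) :
    (Nat.card C : A) * ∑ y with y ∈ dualCode (C : Set (Fin n → R)), ∏ i, f i (y i) =
      ∑ c with c ∈ C, ∏ i, ∑ v, f i v * χ (v * c i) := by
  simp only [Fintype.prod_sum, prod_mul_distrib, ← addChar_dotProduct]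
  rw [sum_comm, mul_sum, sum_filter]
  refine sum_congr rfl fun y _ => ?_
  rw [← mul_sum, sum_addChar_dotProduct hχ, mul_ite, mul_zero, mul_comm]

variable [DecidableEq R]

lemma sum_ite_mul_addChar (hχ : χ.IsPrimitive) (e x : A) (a : R) :
    ∑ v, (if v = 0 then e else x) * χ (v * a) =
      if a = 0 then e + (Fintype.card R - 1) * x else e - x := by
  have hsplit (v : R) : (if v = 0 then e else x) * χ (v * a) =
      x * χ (v * a) + if v = 0 then e - x else 0 := by
    split_ifs with hv
    · simp only [hv, zero_mul, AddChar.map_zero_eq_one]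
      ring
    · ring
  simp only [hsplit, sum_add_distrib, ← mul_sum, AddChar.sum_mulShift a hχ, sum_ite_eq', mem_univ,
    if_true]
  split_ifs
  · ring
  · rw [Nat.cast_zero, mul_zero, zero_add]

/-- The term that a word of weight `w` with `j` nonzero coordinates among `t` given ones
contributes to the MacWilliams transform of `supersetEnumerator`, for length `n` and alphabet
size `q`. -/
def macWilliamsTerm (n q t : ℕ) (x : A) (w j : ℕ) : A :=
  (-x) ^ j * ((q - 1) * x) ^ (t - j) * ((1 - x) ^ (w - j) * (1 + (q - 1) * x) ^ (n - (t + w - j)))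

open Classical in
theorem card_mul_supersetEnumerator_dualCode (hχ : χ.IsPrimitive) (C : Submodule R (Fin n → R))
    (T : Finset (Fin n)) (x : A) :
    (Nat.card C : A) * supersetEnumerator (dualCode (C : Set (Fin n → R)) : Set (Fin n → R)) T x =
      ∑ c with c ∈ C,
        macWilliamsTerm n (Fintype.card R) #T x (hammingNorm c) #(T ∩ wordSupport c) := by
  simp only [supersetEnumerator, SetLike.mem_coe, ← prod_ite_eq_ite_subset_wordSupport]
  rw [card_mul_sum_dualCode_prod hχ C fun i v => if v = 0 then if i ∈ T then 0 else 1 else x]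
  refine sum_congr rfl fun c _ => ?_
  have hfactor (i : Fin n) :
      ∑ v, (if v = 0 then if i ∈ T then 0 else 1 else x) * χ (v * c i) =
        if i ∈ T then if i ∈ wordSupport c then -x else (Fintype.card R - 1) * x
        else if i ∈ wordSupport c then 1 - x else 1 + (Fintype.card R - 1) * x := by
    rw [sum_ite_mul_addChar hχ]
    by_cases hi : c i = 0 <;> by_cases hiT : i ∈ T <;> simp [hi, hiT]
  simp only [hfactor, prod_ite_mem_ite_mem, macWilliamsTerm, card_sdiff, card_compl, card_union,
    card_wordSupport, Fintype.card_fin, inter_comm (wordSupport c)]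

end MacWilliams

/-- Every finite field and every `ZMod m` with `m ≠ 0` has a primitive additive character with
values in `ℂ`; a finite commutative ring need not have one. -/
theorem dual_code_holds_t_designs_general {R K : Type*} [CommRing R] [Finite R] [DecidableEq R]
    [CommRing K] [IsDomain K] [CharZero K] {χ : AddChar R K} (hχ : χ.IsPrimitive) {n t : ℕ}
    (C : Submodule R (Fin n → R)) (hmin : ∀ c ∈ C, c ≠ 0 → t ≤ hammingNorm c)
    (hdes : ∀ w, 0 < w → HoldsDesign (C : Set (Fin n → R)) t w) (w : ℕ) :
    HoldsDesign (dualCode (C : Set (Fin n → R)) : Set (Fin n → R)) t w := by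
  have := Fintype.ofFinite R
  have hχX : ((Polynomial.C : K →+* K[X]).toMonoidHom.compAddChar χ).IsPrimitive :=
    hχ.compMulHom_of_isPrimitive C_injective
  have hcard : (Nat.card C : K[X]) ≠ 0 := Nat.cast_ne_zero.mpr Nat.card_pos.ne'
  refine holdsDesign_iff_isDesign.mpr (isDesign_of_forall_card_eq fun T T' hT hT' => ?_)
  have henum : supersetEnumerator (dualCode (C : Set (Fin n → R)) : Set (Fin n → R)) T (X : K[X]) =
      supersetEnumerator (dualCode (C : Set (Fin n → R)) : Set (Fin n → R)) T' X := by
    refine mul_left_cancel₀ hcard ?_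
    rw [card_mul_supersetEnumerator_dualCode hχX, card_mul_supersetEnumerator_dualCode hχX, hT, hT']
    exact sum_weight_card_inter_eq
      (fun w s hs => isDesign_wordsOfWeight_of_le hmin (hdes w) hs) _ hT hT'
  have hcoeff := congrArg (coeff · w) henum
  simpa only [coeff_supersetEnumerator_X, Nat.cast_inj] using hcoeff

/-- Let `C` be a binary linear code of length `n`, dimension `κ > 1`
and minimum nonzero Hamming weight `d`, and let `0 < t < d`. If for each weight `w > 0`
the supports of the weight-`w` codewords of `C` form a `t`-design, then for each nonzero
weight the supports of the codewords of that weight in `C^⊥` also form a `t`-design.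
(For binary codes distinct codewords have distinct supports, so supports are counted via
codewords.) -/
theorem dual_code_holds_t_designs
    (n κ d t : ℕ)
    (C : Submodule (ZMod 2) (Fin n → ZMod 2))
    (hκ : Module.finrank (ZMod 2) ↥C = κ) (hκ1 : 1 < κ)
    (hd : IsLeast {i | ∃ c ∈ C, c ≠ 0 ∧ hammingNorm c = i} d)
    (ht : 0 < t) (htd : t < d)
    (hdes : ∀ w, 0 < w →
      ∃ lam, ∀ T : Finset (Fin n), T.card = t →
        {c : Fin n → ZMod 2 |
          c ∈ C ∧ hammingNorm c = w ∧ ∀ i ∈ T, c i ≠ 0}.ncard = lam) :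
    ∀ w, 0 < w →
      ∃ lam, ∀ T : Finset (Fin n), T.card = t →
        {y : Fin n → ZMod 2 |
          y ∈ dualCode (C : Set (Fin n → ZMod 2)) ∧ hammingNorm y = w ∧
            ∀ i ∈ T, y i ≠ 0}.ncard = lam :=
  fun w _ => dual_code_holds_t_designs_general (ZMod.isPrimitive_stdAddChar 2) C
    (fun c hc hc0 => htd.le.trans (hd.2 ⟨c, hc, hc0, rfl⟩)) hdes w
end
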